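/- arXiv:1807.06549 — 5 statements merged into one kernel-verified Lean document; each statement's English description precedes it below -/
import Mathlib

section
/- Let σ > 0 and μ ≥ 0 be constants. For each ω > 0 define r := ω√((μσ−1)²ω² + (μ+σω²)²)/(1+σ²ω²), let θ ∈ (0,π) be the unique angle with cos(θ) = (μσ−1)ω²/((1+σ²ω²)r) and sin(θ) = (μ+σω²)ω/((1+σ²ω²)r), set a := √r·cos(θ/2), b := √r·sin(θ/2), and define Q(ω) := √(p + √M), where p := (b·sinh(2a) − a·sin(2b))/(4ab(cosh(2a) − cos(2b))) and M := (4(a²+b²) − 4(b·sin(2b)·cosh(2a) + a·sinh(2a)·cos(2b)) + sinh²(2a) + sin²(2b)) / (16(a²+b²)(cosh(2a) − cos(2b))²). Suppose γ ≥ 0 is a constant such that for every bounded d ∈ C²([0,∞);ℝ) and every classical solution u of the damped wave system with boundary input d one has limsup_{t→+∞} ( (∫₀¹ u(t,x)² dx)^{1/2} ) ≤ γ · sup_{t≥0} |d(t)|. Then γ ≥ sup_{ω>0} Q(ω). -/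
open Real Filter MeasureTheory intervalIntegral Set

noncomputable section

/-- Time derivative ∂u/∂t. -/
def u_t (u : ℝ → ℝ → ℝ) (t x : ℝ) : ℝ := deriv (fun τ => u τ x) t

/-- Second time derivative ∂²u/∂t². -/
def u_tt (u : ℝ → ℝ → ℝ) (t x : ℝ) : ℝ := deriv (deriv (fun τ => u τ x)) t

/-- Second space derivative ∂²u/∂x². -/
def u_xx (u : ℝ → ℝ → ℝ) (t x : ℝ) : ℝ := deriv (deriv (fun y => u t y)) x

/-- Mixed derivative ∂³u/∂t∂x². -/
def u_txx (u : ℝ → ℝ → ℝ) (t x : ℝ) : ℝ := deriv (deriv (fun y => u_t u t y)) x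

/-- A classical solution of the wave equation with Kelvin-Voigt and viscous damping
with boundary input `d`: `u` is of class `C²`, `x ↦ ∂u/∂t(t,x)` is of class `C²` for
each `t ≥ 0`, the PDE holds for `t ≥ 0`, `x ∈ [0,1]`, and `u(t,0) = d(t)`, `u(t,1) = 0`. -/
def IsClassicalSolution (σ μ : ℝ) (d : ℝ → ℝ) (u : ℝ → ℝ → ℝ) : Prop :=
  ContDiff ℝ 2 (Function.uncurry u) ∧
  (∀ t : ℝ, 0 ≤ t → ContDiff ℝ 2 (fun x => u_t u t x)) ∧
  (∀ t x : ℝ, 0 ≤ t → x ∈ Set.Icc (0:ℝ) 1 →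
    u_tt u t x = u_xx u t x + σ * u_txx u t x - μ * u_t u t x) ∧
  (∀ t : ℝ, 0 ≤ t → u t 0 = d t ∧ u t 1 = 0)

/-- A bounded disturbance of class `C²`. -/
def BddC2 (d : ℝ → ℝ) : Prop :=
  ContDiff ℝ 2 d ∧ ∃ M : ℝ, ∀ t : ℝ, 0 ≤ t → |d t| ≤ M

/-- `sup_{t ≥ 0} |d(t)|`. -/
def supD (d : ℝ → ℝ) : ℝ := sSup {y : ℝ | ∃ t : ℝ, 0 ≤ t ∧ y = |d t|}

/-- `max_{x ∈ [0,1]} |u(t,x)|`, the spatial sup norm of the displacement. -/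
def supNorm (u : ℝ → ℝ → ℝ) (t : ℝ) : ℝ :=
  sSup {y : ℝ | ∃ x ∈ Set.Icc (0:ℝ) 1, y = |u t x|}

/-- `(∫₀¹ u(t,x)² dx)^{1/2}`, the spatial L² norm of the displacement. -/
def L2Norm (u : ℝ → ℝ → ℝ) (t : ℝ) : ℝ := Real.sqrt (∫ x in (0:ℝ)..1, (u t x) ^ 2)

/-- `r := ω√((μσ−1)²ω² + (μ+σω²)²)/(1+σ²ω²)`. -/
def rfreq (σ μ ω : ℝ) : ℝ :=
  ω * Real.sqrt ((μ * σ - 1) ^ 2 * ω ^ 2 + (μ + σ * ω ^ 2) ^ 2) / (1 + σ ^ 2 * ω ^ 2)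

/-- The unique angle `θ ∈ (0,π)` with `cos(θ) = (μσ−1)ω²/((1+σ²ω²)r)` and
`sin(θ) = (μ+σω²)ω/((1+σ²ω²)r)`; since the sine is positive it is given by `arccos`. -/
def θfreq (σ μ ω : ℝ) : ℝ :=
  Real.arccos ((μ * σ - 1) * ω ^ 2 / ((1 + σ ^ 2 * ω ^ 2) * rfreq σ μ ω))

/-- `a := √r·cos(θ/2)`. -/
def afreq (σ μ ω : ℝ) : ℝ := Real.sqrt (rfreq σ μ ω) * Real.cos (θfreq σ μ ω / 2)

/-- `b := √r·sin(θ/2)`. -/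
def bfreq (σ μ ω : ℝ) : ℝ := Real.sqrt (rfreq σ μ ω) * Real.sin (θfreq σ μ ω / 2)

/-- `p := (b·sinh(2a) − a·sin(2b))/(4ab(cosh(2a) − cos(2b)))`. -/
def pFreq (σ μ ω : ℝ) : ℝ :=
  (bfreq σ μ ω * Real.sinh (2 * afreq σ μ ω) - afreq σ μ ω * Real.sin (2 * bfreq σ μ ω)) /
    (4 * afreq σ μ ω * bfreq σ μ ω *
      (Real.cosh (2 * afreq σ μ ω) - Real.cos (2 * bfreq σ μ ω)))

/-- `M := (4(a²+b²) − 4(b sin(2b)cosh(2a) + a sinh(2a)cos(2b)) + sinh²(2a) + sin²(2b))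
 / (16(a²+b²)(cosh(2a) − cos(2b))²)`. -/
def MFreq (σ μ ω : ℝ) : ℝ :=
  (4 * (afreq σ μ ω ^ 2 + bfreq σ μ ω ^ 2) -
      4 * (bfreq σ μ ω * Real.sin (2 * bfreq σ μ ω) * Real.cosh (2 * afreq σ μ ω) +
        afreq σ μ ω * Real.sinh (2 * afreq σ μ ω) * Real.cos (2 * bfreq σ μ ω)) +
      Real.sinh (2 * afreq σ μ ω) ^ 2 + Real.sin (2 * bfreq σ μ ω) ^ 2) /
    (16 * (afreq σ μ ω ^ 2 + bfreq σ μ ω ^ 2) *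
      (Real.cosh (2 * afreq σ μ ω) - Real.cos (2 * bfreq σ μ ω)) ^ 2)

/-- `Q(ω) := √(p + √M)`. -/
def Qfreq (σ μ ω : ℝ) : ℝ := Real.sqrt (pFreq σ μ ω + Real.sqrt (MFreq σ μ ω))

/-!
Separation of variables: `u(t,x) = Re (e^{st} φ(x))` solves the damped wave equation exactly when
`φ'' = k² φ` with the dispersion relation `k² = (s² + μs) / (1 + σs)`. For the input
`d(t) = cos(ωt)`, of supremum `1`, take `s = iω` and `φ(x) = sinh(k(1-x)) / sinh k`; then
`k = a + ib`. Since `(Re z)² = (|z|² + Re z²) / 2`,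

  `∫₀¹ u(t,x)² dx = ½ ∫₀¹ |φ|² + ½ Re (e^{2iωt} ∫₀¹ φ²)`,

which is periodic in `t` with maximum `½ ∫₀¹ |φ|² + ½ |∫₀¹ φ²|`. The first half-integral is `p`
and the second is `√M`, so the limit superior of the `L²` norm of this solution is `Q(ω)`.
-/

/-! ### Periodic functions and quadratic means -/

lemma limsup_atTop_of_periodic {α β : Type*} [AddCommGroup α] [LinearOrder α]
    [IsOrderedAddMonoid α] [Archimedean α] [ConditionallyCompleteLinearOrder β] {f : α → β}
    {c x₀ : α} (hf : Function.Periodic f c) (hc : 0 < c) (hmax : ∀ x, f x ≤ f x₀) :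
    limsup f atTop = f x₀ := by
  have hfreq : ∃ᶠ x in atTop, f x₀ ≤ f x := by
    refine frequently_atTop.mpr fun T ↦ ?_
    obtain ⟨y, hy, hfy⟩ := hf.exists_mem_Ico hc x₀ T
    exact ⟨y, hy.1, hfy.le⟩
  exact le_antisymm
    (limsup_le_of_le (IsCoboundedUnder.of_frequently_ge hfreq) (Eventually.of_forall hmax))
    (le_limsup_of_frequently_le hfreq (isBoundedUnder_of ⟨f x₀, hmax⟩))

lemma re_mul_sq (c z : ℂ) :
    (c * z).re ^ 2 = ‖c‖ ^ 2 / 2 * ‖z‖ ^ 2 + (c ^ 2 / 2 * z ^ 2).re := by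
  have re_sq (w : ℂ) : w.re ^ 2 = ‖w‖ ^ 2 / 2 + (w ^ 2).re / 2 := by
    rw [Complex.sq_norm, Complex.normSq_apply, sq w, Complex.mul_re]
    ring
  rw [re_sq, norm_mul, ← Complex.div_ofNat_re]
  ring_nf

lemma integral_re_mul_sq {α : Type*} [MeasurableSpace α] {ν : Measure α} {f : α → ℂ}
    (hf : Integrable (fun x ↦ f x ^ 2) ν) (c : ℂ) :
    ∫ x, (c * f x).re ^ 2 ∂ν
      = (‖c‖ ^ 2 * (∫ x, ‖f x‖ ^ 2 ∂ν) + (c ^ 2 * ∫ x, f x ^ 2 ∂ν).re) / 2 := by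
  have hnorm : Integrable (fun x ↦ ‖f x‖ ^ 2) ν := by simpa only [norm_pow] using hf.norm
  have hsq : Integrable (fun x ↦ c ^ 2 / 2 * f x ^ 2) ν := hf.const_mul _
  have hre : Integrable (fun x ↦ (c ^ 2 / 2 * f x ^ 2).re) ν := hsq.re
  calc ∫ x, (c * f x).re ^ 2 ∂ν
      = ∫ x, (‖c‖ ^ 2 / 2 * ‖f x‖ ^ 2 + (c ^ 2 / 2 * f x ^ 2).re) ∂ν := by simp only [re_mul_sq]
    _ = (∫ x, ‖c‖ ^ 2 / 2 * ‖f x‖ ^ 2 ∂ν) + (∫ x, c ^ 2 / 2 * f x ^ 2 ∂ν).re := by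
      rw [integral_add (hnorm.const_mul _) hre]
      exact congrArg _ (integral_re hsq)
    _ = _ := by
      rw [MeasureTheory.integral_const_mul, MeasureTheory.integral_const_mul,
        div_mul_eq_mul_div (c ^ 2), Complex.div_ofNat_re]
      ring

/-! ### Separated solutions -/

/-- The separated displacement `Re (e^{st} φ(x))` with complex rate `s` and complex spatial
profile `φ`, the ansatz for solutions of the damped wave system. -/
def modalWave (s : ℂ) (φ : ℝ → ℂ) (t x : ℝ) : ℝ := (Complex.exp (s * t) * φ x).re

section ModalWave

variable {s : ℂ} {φ : ℝ → ℂ}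

lemma u_t_modalWave (s : ℂ) (φ : ℝ → ℂ) :
    u_t (modalWave s φ) = modalWave s (fun x ↦ s * φ x) := by
  funext t x
  have hexp : HasDerivAt (fun τ : ℝ ↦ Complex.exp (s * τ) * φ x)
      (Complex.exp (s * t) * (s * φ x)) t := by
    have h := ((Complex.ofRealCLM.hasDerivAt (x := t)).const_mul s).cexp.mul_const (φ x)
    exact h.congr_deriv (by simp [mul_assoc])
  exact (Complex.reCLM.hasFDerivAt.comp_hasDerivAt t hexp).deriv

lemma u_tt_modalWave (s : ℂ) (φ : ℝ → ℂ) :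
    u_tt (modalWave s φ) = modalWave s (fun x ↦ s ^ 2 * φ x) := by
  have h : u_tt (modalWave s φ) = u_t (u_t (modalWave s φ)) := rfl
  simp only [h, u_t_modalWave, ← mul_assoc, ← sq]

lemma deriv_modalWave (hφ : Differentiable ℝ φ) (t : ℝ) :
    deriv (modalWave s φ t) = modalWave s (deriv φ) t := by
  funext x
  have h := ((hφ x).hasDerivAt).const_mul (Complex.exp (s * t))
  exact (Complex.reCLM.hasFDerivAt.comp_hasDerivAt x h).deriv

lemma u_xx_modalWave (hφ : ContDiff ℝ 2 φ) :
    u_xx (modalWave s φ) = modalWave s (deriv (deriv φ)) := by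
  funext t x
  change deriv (deriv (modalWave s φ t)) x = _
  rw [deriv_modalWave (hφ.differentiable two_ne_zero), deriv_modalWave hφ.differentiable_deriv_two]

lemma u_txx_modalWave (hφ : ContDiff ℝ 2 φ) :
    u_txx (modalWave s φ) = modalWave s (fun x ↦ s * deriv (deriv φ) x) := by
  have h : u_txx (modalWave s φ) = u_xx (u_t (modalWave s φ)) := rfl
  rw [h, u_t_modalWave, u_xx_modalWave (contDiff_const.mul hφ)]
  simp only [deriv_const_mul_field']

lemma contDiff_modalWave {n : WithTop ℕ∞} (hφ : ContDiff ℝ n φ) :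
    ContDiff ℝ n (Function.uncurry (modalWave s φ)) := by
  have hexp : ContDiff ℝ n (fun q : ℝ × ℝ ↦ Complex.exp (s * q.1)) :=
    (contDiff_const.mul (Complex.ofRealCLM.contDiff.comp contDiff_fst)).cexp
  exact Complex.reCLM.contDiff.comp (hexp.mul (hφ.comp contDiff_snd))

lemma isClassicalSolution_modalWave {σ μ : ℝ} (hφ : ContDiff ℝ 2 φ)
    (hode : ∀ x ∈ Icc (0 : ℝ) 1, (1 + σ * s) * deriv (deriv φ) x = (s ^ 2 + μ * s) * φ x)
    (hφ1 : φ 1 = 0) :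
    IsClassicalSolution σ μ (fun t ↦ modalWave s φ t 0) (modalWave s φ) := by
  refine ⟨contDiff_modalWave hφ, fun t _ ↦ ?_, fun t x _ hx ↦ ?_,
    fun t _ ↦ ⟨rfl, by simp [modalWave, hφ1]⟩⟩
  · rw [u_t_modalWave]
    exact (contDiff_modalWave (contDiff_const.mul hφ)).comp (contDiff_const.prodMk contDiff_id)
  · rw [u_tt_modalWave, u_xx_modalWave hφ, u_txx_modalWave hφ, u_t_modalWave]
    simp only [modalWave, ← Complex.re_ofReal_mul, ← Complex.add_re, ← Complex.sub_re]
    congr 1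
    linear_combination -Complex.exp (s * t) * hode x hx

lemma L2Norm_modalWave (hφ : IntervalIntegrable (fun x ↦ φ x ^ 2) volume 0 1) (t : ℝ) :
    L2Norm (modalWave s φ) t = √((‖Complex.exp (s * t)‖ ^ 2 * (∫ x in (0 : ℝ)..1, ‖φ x‖ ^ 2)
      + (Complex.exp (s * t) ^ 2 * ∫ x in (0 : ℝ)..1, φ x ^ 2).re) / 2) := by
  rw [intervalIntegrable_iff_integrableOn_Ioc_of_le zero_le_one] at hφ
  simp only [L2Norm, modalWave, integral_of_le zero_le_one]
  rw [integral_re_mul_sq hφ]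

lemma periodic_modalWave (ω : ℝ) (φ : ℝ → ℂ) :
    Function.Periodic (modalWave (ω * Complex.I) φ) (2 * π / ω) := by
  rcases eq_or_ne ω 0 with rfl | hω
  · simp [Function.Periodic]
  intro t
  funext x
  have hω' : (ω : ℂ) ≠ 0 := Complex.ofReal_ne_zero.mpr hω
  have hphase : ω * Complex.I * ((t + 2 * π / ω : ℝ) : ℂ)
      = ω * Complex.I * t + 2 * π * Complex.I := by
    push_cast
    field_simp
  simp only [modalWave, hphase, Complex.exp_periodic _]

lemma exists_exp_mul_I_sq_mul_eq_norm {ω : ℝ} (hω : ω ≠ 0) (z : ℂ) :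
    ∃ t : ℝ, Complex.exp (ω * Complex.I * t) ^ 2 * z = ‖z‖ := by
  have hω' : (ω : ℂ) ≠ 0 := Complex.ofReal_ne_zero.mpr hω
  have hphase : ((2 : ℕ) : ℂ) * (ω * Complex.I * ((-(z.arg / (2 * ω)) : ℝ) : ℂ))
      = -(z.arg * Complex.I) := by
    push_cast
    field_simp
  -- This time makes the phase of `e^{2iωt}` cancel that of `z`.
  refine ⟨-(z.arg / (2 * ω)), ?_⟩
  nth_rewrite 2 [← Complex.norm_mul_exp_arg_mul_I z]
  rw [← Complex.exp_nat_mul, hphase, mul_left_comm, ← Complex.exp_add, neg_add_cancel,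
    Complex.exp_zero, mul_one]

lemma limsup_L2Norm_modalWave {ω : ℝ} (hω : 0 < ω)
    (hφ : IntervalIntegrable (fun x ↦ φ x ^ 2) volume 0 1) :
    limsup (L2Norm (modalWave (ω * Complex.I) φ)) atTop
      = √(((∫ x in (0 : ℝ)..1, ‖φ x‖ ^ 2) + ‖∫ x in (0 : ℝ)..1, φ x ^ 2‖) / 2) := by
  have hunit (t : ℝ) : ‖Complex.exp (ω * Complex.I * t)‖ = 1 := by
    rw [mul_right_comm, ← Complex.ofReal_mul, Complex.norm_exp_ofReal_mul_I]
  have hre_le (t : ℝ) (z : ℂ) : (Complex.exp (ω * Complex.I * t) ^ 2 * z).re ≤ ‖z‖ := by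
    refine (Complex.re_le_norm _).trans_eq ?_
    rw [norm_mul, norm_pow, hunit, one_pow, one_mul]
  have hL2 := L2Norm_modalWave (s := ω * Complex.I) hφ
  simp only [hunit, one_pow, one_mul] at hL2
  obtain ⟨t₀, ht₀⟩ := exists_exp_mul_I_sq_mul_eq_norm hω.ne' (∫ x in (0 : ℝ)..1, φ x ^ 2)
  have hL2₀ := hL2 t₀
  rw [ht₀, Complex.ofReal_re] at hL2₀
  have hperiodic : Function.Periodic (L2Norm (modalWave (ω * Complex.I) φ)) (2 * π / ω) :=
    (periodic_modalWave ω φ).comp fun v ↦ √(∫ x in (0 : ℝ)..1, v x ^ 2)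
  rw [limsup_atTop_of_periodic (x₀ := t₀) hperiodic (by positivity) fun t ↦ ?_, hL2₀]
  rw [hL2, hL2₀]
  gcongr
  exact hre_le t _

end ModalWave

/-! ### Hyperbolic functions of a complex variable -/

lemma sinh_eq_re_add_im (z : ℂ) :
    Complex.sinh z = (Real.sinh z.re * Real.cos z.im : ℝ)
      + (Real.cosh z.re * Real.sin z.im : ℝ) * Complex.I := by
  conv_lhs => rw [← Complex.re_add_im z]
  rw [Complex.sinh_add, Complex.cosh_mul_I, Complex.sinh_mul_I]
  push_cast
  ring

lemma norm_sinh_sq (z : ℂ) :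
    ‖Complex.sinh z‖ ^ 2 = (Real.cosh (2 * z.re) - Real.cos (2 * z.im)) / 2 := by
  rw [Complex.sq_norm, sinh_eq_re_add_im, Complex.normSq_add_mul_I, Real.cosh_two_mul,
    Real.cos_two_mul]
  linear_combination (1 / 2 - Real.cos z.im ^ 2) * Real.cosh_sq z.re
    + Real.cosh z.re ^ 2 * Real.sin_sq_add_cos_sq z.im

lemma norm_sinh_sub_self_sq (z : ℂ) :
    ‖Complex.sinh z - z‖ ^ 2 = z.re ^ 2 + z.im ^ 2
      - 2 * (z.im * Real.sin z.im * Real.cosh z.re + z.re * Real.sinh z.re * Real.cos z.im)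
      + Real.sinh z.re ^ 2 + Real.sin z.im ^ 2 := by
  have hsub : Complex.sinh z - z = (Real.sinh z.re * Real.cos z.im - z.re : ℝ)
      + (Real.cosh z.re * Real.sin z.im - z.im : ℝ) * Complex.I := by
    rw [sinh_eq_re_add_im]
    push_cast
    linear_combination Complex.re_add_im z
  rw [hsub, Complex.sq_norm, Complex.normSq_add_mul_I]
  linear_combination Real.sin z.im ^ 2 * Real.cosh_sq z.re
    + Real.sinh z.re ^ 2 * Real.sin_sq_add_cos_sq z.im

lemma sinh_ne_zero_of_re_ne_zero {z : ℂ} (hz : z.re ≠ 0) : Complex.sinh z ≠ 0 := by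
  have hpos : 0 < ‖Complex.sinh z‖ ^ 2 := by
    rw [norm_sinh_sq]
    linarith [Real.one_lt_cosh.mpr (mul_ne_zero two_ne_zero hz), Real.cos_le_one (2 * z.im)]
  exact fun h ↦ by simp [h] at hpos

lemma integral_cosh (a b : ℝ) : ∫ x in a..b, Real.cosh x = Real.sinh b - Real.sinh a :=
  integral_eq_sub_of_hasDerivAt (fun x _ ↦ Real.hasDerivAt_sinh x)
    (Real.continuous_cosh.intervalIntegrable a b)

lemma integral_cosh_mul_complex {z : ℂ} (hz : z ≠ 0) (a b : ℝ) :
    ∫ x in a..b, Complex.cosh (z * x) = Complex.sinh (z * b) / z - Complex.sinh (z * a) / z := by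
  have hzI : z * Complex.I ≠ 0 := mul_ne_zero hz Complex.I_ne_zero
  simpa only [mul_right_comm z Complex.I, Complex.cos_mul_I, Complex.sin_mul_I,
    mul_div_mul_right _ _ Complex.I_ne_zero] using integral_cos_mul_complex hzI a b

lemma integral_norm_sinh_mul_sq {k : ℂ} (hre : k.re ≠ 0) (him : k.im ≠ 0) :
    ∫ x in (0 : ℝ)..1, ‖Complex.sinh (k * x)‖ ^ 2
      = (Real.sinh (2 * k.re) / (2 * k.re) - Real.sin (2 * k.im) / (2 * k.im)) / 2 := by
  have hpt (x : ℝ) : ‖Complex.sinh (k * x)‖ ^ 2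
      = (Real.cosh (2 * k.re * x) - Real.cos (2 * k.im * x)) / 2 := by
    rw [norm_sinh_sq, Complex.re_mul_ofReal, Complex.im_mul_ofReal, mul_assoc, mul_assoc]
  simp only [hpt, intervalIntegral.integral_div]
  rw [intervalIntegral.integral_sub (Continuous.intervalIntegrable (by fun_prop) _ _)
      (Continuous.intervalIntegrable (by fun_prop) _ _),
    integral_comp_mul_left Real.cosh (mul_ne_zero two_ne_zero hre),
    integral_comp_mul_left Real.cos (mul_ne_zero two_ne_zero him), integral_cosh, integral_cos]
  simp [div_eq_inv_mul]

lemma integral_sinh_mul_sq {k : ℂ} (hk : k ≠ 0) :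
    ∫ x in (0 : ℝ)..1, Complex.sinh (k * x) ^ 2 = (Complex.sinh (2 * k) - 2 * k) / (4 * k) := by
  have hpt (x : ℝ) : Complex.sinh (k * x) ^ 2 = (Complex.cosh (2 * k * x) - 1) / 2 := by
    rw [mul_assoc, Complex.cosh_two_mul, Complex.cosh_sq]
    ring
  simp only [hpt, intervalIntegral.integral_div]
  rw [intervalIntegral.integral_sub (Continuous.intervalIntegrable (by fun_prop) _ _)
      intervalIntegrable_const, integral_cosh_mul_complex (mul_ne_zero two_ne_zero hk)]
  simp only [Complex.ofReal_one, mul_one, Complex.ofReal_zero, mul_zero, Complex.sinh_zero,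
    zero_div, sub_zero, intervalIntegral.integral_const, one_smul]
  field_simp
  ring

/-! ### The spatial profile -/

/-- The solution `sinh(k(1-x)) / sinh k` of `φ'' = k² φ` with `φ(0) = 1` and `φ(1) = 0`, which is
the spatial profile of the response to a harmonic boundary input. Where
`sinh k = 0` it takes the junk value `0`. -/
def dirichletProfile (k : ℂ) (x : ℝ) : ℂ := Complex.sinh (k * (1 - x : ℝ)) / Complex.sinh k

section DirichletProfile

variable {k : ℂ}

lemma dirichletProfile_zero (hk : Complex.sinh k ≠ 0) : dirichletProfile k 0 = 1 := by
  simp [dirichletProfile, hk]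

lemma dirichletProfile_one (k : ℂ) : dirichletProfile k 1 = 0 := by
  simp [dirichletProfile]

lemma contDiff_dirichletProfile {n : WithTop ℕ∞} (k : ℂ) : ContDiff ℝ n (dirichletProfile k) :=
  ((Complex.contDiff_sinh.restrict_scalars ℝ).comp (contDiff_const.mul
    (Complex.ofRealCLM.contDiff.comp (contDiff_const.sub contDiff_id)))).div_const _

lemma deriv_deriv_dirichletProfile (k : ℂ) (x : ℝ) :
    deriv (deriv (dirichletProfile k)) x = k ^ 2 * dirichletProfile k x := by
  have harg (y : ℝ) : HasDerivAt (fun y : ℝ ↦ k * (1 - y : ℝ)) (-k) y := by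
    have h := (((hasDerivAt_id y).const_sub 1).ofReal_comp).const_mul k
    exact h.congr_deriv (by simp)
  have hsinh (y : ℝ) := (Complex.hasDerivAt_sinh _).comp y (harg y)
  have hcosh (y : ℝ) := (Complex.hasDerivAt_cosh _).comp y (harg y)
  have hderiv : deriv (dirichletProfile k)
      = fun y ↦ Complex.cosh (k * (1 - y : ℝ)) * -k / Complex.sinh k :=
    funext fun y ↦ ((hsinh y).div_const _).deriv
  rw [hderiv, dirichletProfile]
  exact (((hcosh x).mul_const (-k)).div_const _).deriv.trans (by ring)

lemma integral_norm_dirichletProfile_sq (hre : k.re ≠ 0) (him : k.im ≠ 0) :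
    ∫ x in (0 : ℝ)..1, ‖dirichletProfile k x‖ ^ 2
      = 2 * ((k.im * Real.sinh (2 * k.re) - k.re * Real.sin (2 * k.im)) /
        (4 * k.re * k.im * (Real.cosh (2 * k.re) - Real.cos (2 * k.im)))) := by
  simp only [dirichletProfile, norm_div, div_pow, intervalIntegral.integral_div]
  rw [integral_comp_sub_left (fun y ↦ ‖Complex.sinh (k * y)‖ ^ 2) 1, sub_self, sub_zero,
    integral_norm_sinh_mul_sq hre him, norm_sinh_sq]
  field_simp
  ring

lemma integral_dirichletProfile_sq (hk : k ≠ 0) :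
    ∫ x in (0 : ℝ)..1, dirichletProfile k x ^ 2
      = (Complex.sinh (2 * k) - 2 * k) / (4 * k * Complex.sinh k ^ 2) := by
  simp only [dirichletProfile, div_pow, intervalIntegral.integral_div]
  rw [integral_comp_sub_left (fun y ↦ Complex.sinh (k * y) ^ 2) 1, sub_self, sub_zero,
    integral_sinh_mul_sq hk, div_div]

lemma norm_integral_dirichletProfile_sq_sq (hk : k ≠ 0) :
    ‖∫ x in (0 : ℝ)..1, dirichletProfile k x ^ 2‖ ^ 2
      = 4 * ((4 * (k.re ^ 2 + k.im ^ 2) -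
        4 * (k.im * Real.sin (2 * k.im) * Real.cosh (2 * k.re) +
          k.re * Real.sinh (2 * k.re) * Real.cos (2 * k.im)) +
        Real.sinh (2 * k.re) ^ 2 + Real.sin (2 * k.im) ^ 2) /
      (16 * (k.re ^ 2 + k.im ^ 2) * (Real.cosh (2 * k.re) - Real.cos (2 * k.im)) ^ 2)) := by
  have hk2 : ‖k‖ ^ 2 = k.re ^ 2 + k.im ^ 2 := by
    rw [Complex.sq_norm, Complex.normSq_apply]
    ring
  rw [integral_dirichletProfile_sq hk, norm_div, div_pow, norm_sinh_sub_self_sq, norm_mul,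
    norm_mul, norm_pow, norm_sinh_sq, mul_pow, mul_pow, hk2]
  simp only [Complex.mul_re, Complex.re_ofNat, Complex.im_ofNat, zero_mul, sub_zero,
    Complex.mul_im, add_zero, Complex.norm_ofNat]
  field_simp
  ring

end DirichletProfile

/-! ### The wave number -/

/-- The symbol `(s² + μs) / (1 + σs)` of the damped wave equation: `e^{st} φ(x)` is a solution when
`φ''` is this multiple of `φ`. -/
def dispersionSymbol (σ μ : ℝ) (s : ℂ) : ℂ := (s ^ 2 + μ * s) / (1 + σ * s)

/-- The square root `a + ib` of the dispersion symbol at `s = iω`, assembled from the quantities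
`a`, `b` of the statement. -/
def waveNumber (σ μ ω : ℝ) : ℂ := ⟨afreq σ μ ω, bfreq σ μ ω⟩

section WaveNumber

variable {σ μ ω : ℝ}

lemma one_add_mul_mul_I_ne_zero (σ ω : ℝ) : 1 + σ * (ω * Complex.I) ≠ 0 := fun h ↦ by
  simpa using congrArg Complex.re h

lemma dispersionSymbol_mul_I (σ μ ω : ℝ) :
    dispersionSymbol σ μ (ω * Complex.I) = ⟨(μ * σ - 1) * ω ^ 2 / (1 + σ ^ 2 * ω ^ 2),
      (μ + σ * ω ^ 2) * ω / (1 + σ ^ 2 * ω ^ 2)⟩ := by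
  rw [dispersionSymbol, div_eq_iff (one_add_mul_mul_I_ne_zero σ ω)]
  apply Complex.ext <;>
    simp only [sq, Complex.add_re, Complex.add_im, Complex.mul_re, Complex.mul_im,
      Complex.ofReal_re, Complex.ofReal_im, Complex.I_re, Complex.I_im, Complex.one_re,
      Complex.one_im, mul_zero, zero_mul, mul_one, sub_self, zero_sub, add_zero, zero_add] <;>
    field_simp <;>
    ring

lemma norm_dispersionSymbol_mul_I (hω : 0 ≤ ω) :
    ‖dispersionSymbol σ μ (ω * Complex.I)‖ = rfreq σ μ ω := by
  have hr : 0 ≤ rfreq σ μ ω := by unfold rfreq; positivity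
  rw [← sq_eq_sq₀ (norm_nonneg _) hr, Complex.sq_norm, dispersionSymbol_mul_I, Complex.normSq_mk,
    rfreq, div_pow, mul_pow, Real.sq_sqrt (by positivity)]
  field_simp

lemma arg_dispersionSymbol_mul_I (hω : 0 < ω) (hdamp : 0 < μ + σ * ω ^ 2) :
    (dispersionSymbol σ μ (ω * Complex.I)).arg = θfreq σ μ ω := by
  have him : 0 < (dispersionSymbol σ μ (ω * Complex.I)).im := by
    rw [dispersionSymbol_mul_I]
    positivity
  rw [Complex.arg_of_im_pos him, norm_dispersionSymbol_mul_I hω.le, dispersionSymbol_mul_I,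
    div_div, θfreq]

lemma waveNumber_sq (hω : 0 < ω) (hdamp : 0 < μ + σ * ω ^ 2) :
    waveNumber σ μ ω ^ 2 = dispersionSymbol σ μ (ω * Complex.I) := by
  have hr : 0 ≤ rfreq σ μ ω := norm_dispersionSymbol_mul_I hω.le ▸ norm_nonneg _
  have hpolar : waveNumber σ μ ω
      = √(rfreq σ μ ω) * Complex.exp ((θfreq σ μ ω / 2 : ℝ) * Complex.I) := by
    apply Complex.ext <;>
      simp only [waveNumber, afreq, bfreq, Complex.re_ofReal_mul, Complex.im_ofReal_mul,
        Complex.exp_ofReal_mul_I_re, Complex.exp_ofReal_mul_I_im]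
  calc waveNumber σ μ ω ^ 2 = rfreq σ μ ω * Complex.exp (θfreq σ μ ω * Complex.I) := by
        rw [hpolar, mul_pow, ← Complex.ofReal_pow, Real.sq_sqrt hr, ← Complex.exp_nat_mul]
        push_cast
        ring_nf
    _ = dispersionSymbol σ μ (ω * Complex.I) := by
        rw [← norm_dispersionSymbol_mul_I hω.le, ← arg_dispersionSymbol_mul_I hω hdamp,
          Complex.norm_mul_exp_arg_mul_I]

lemma waveNumber_re_im_pos (hω : 0 < ω) (hdamp : 0 < μ + σ * ω ^ 2) :
    0 < (waveNumber σ μ ω).re ∧ 0 < (waveNumber σ μ ω).im := by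
  have him_sq : 0 < (waveNumber σ μ ω ^ 2).im := by
    rw [waveNumber_sq hω hdamp, dispersionSymbol_mul_I]
    positivity
  have hprod : 0 < 2 * (waveNumber σ μ ω).re * (waveNumber σ μ ω).im := by
    rw [sq, Complex.mul_im] at him_sq
    linarith
  have him_nonneg : 0 ≤ (waveNumber σ μ ω).im :=
    mul_nonneg (Real.sqrt_nonneg _) (Real.sin_nonneg_of_nonneg_of_le_pi
      (div_nonneg (Real.arccos_nonneg _) zero_le_two)
      ((half_le_self (Real.arccos_nonneg _)).trans (Real.arccos_le_pi _)))
  have hre : 0 < (waveNumber σ μ ω).re := by linarith [pos_of_mul_pos_left hprod him_nonneg]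
  exact ⟨hre, pos_of_mul_pos_right hprod (by positivity)⟩

end WaveNumber

/-! ### The response to a harmonic boundary input -/

section Harmonic

variable {σ μ ω : ℝ}

lemma isClassicalSolution_modalWave_dirichletProfile {s k : ℂ} (hs : 1 + σ * s ≠ 0)
    (hk : Complex.sinh k ≠ 0) (hdisp : k ^ 2 = dispersionSymbol σ μ s) :
    IsClassicalSolution σ μ (fun t ↦ (Complex.exp (s * t)).re)
      (modalWave s (dirichletProfile k)) := by
  have hode (x : ℝ) : (1 + σ * s) * deriv (deriv (dirichletProfile k)) x
      = (s ^ 2 + μ * s) * dirichletProfile k x := by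
    rw [deriv_deriv_dirichletProfile, hdisp, dispersionSymbol, ← mul_assoc, mul_div_cancel₀ _ hs]
  simpa [modalWave, dirichletProfile_zero hk] using isClassicalSolution_modalWave
    (contDiff_dirichletProfile k) (fun x _ ↦ hode x) (dirichletProfile_one k)

lemma isClassicalSolution_cos (hω : 0 < ω) (hdamp : 0 < μ + σ * ω ^ 2) :
    IsClassicalSolution σ μ (fun t ↦ Real.cos (ω * t))
      (modalWave (ω * Complex.I) (dirichletProfile (waveNumber σ μ ω))) := by
  have hcos (t : ℝ) : (Complex.exp (ω * Complex.I * t)).re = Real.cos (ω * t) := by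
    rw [mul_right_comm, ← Complex.ofReal_mul, Complex.exp_ofReal_mul_I_re]
  simpa only [hcos] using isClassicalSolution_modalWave_dirichletProfile
    (one_add_mul_mul_I_ne_zero σ ω)
    (sinh_ne_zero_of_re_ne_zero (waveNumber_re_im_pos hω hdamp).1.ne') (waveNumber_sq hω hdamp)

lemma integral_norm_dirichletProfile_waveNumber_sq (hω : 0 < ω) (hdamp : 0 < μ + σ * ω ^ 2) :
    ∫ x in (0 : ℝ)..1, ‖dirichletProfile (waveNumber σ μ ω) x‖ ^ 2 = 2 * pFreq σ μ ω :=
  have ⟨hre, him⟩ := waveNumber_re_im_pos hω hdamp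
  integral_norm_dirichletProfile_sq hre.ne' him.ne'

lemma norm_integral_dirichletProfile_waveNumber_sq (hω : 0 < ω) (hdamp : 0 < μ + σ * ω ^ 2) :
    ‖∫ x in (0 : ℝ)..1, dirichletProfile (waveNumber σ μ ω) x ^ 2‖ = 2 * √(MFreq σ μ ω) := by
  have hk : waveNumber σ μ ω ≠ 0 := fun h ↦ by
    simpa [h] using (waveNumber_re_im_pos hω hdamp).1
  have hsq : ‖∫ x in (0 : ℝ)..1, dirichletProfile (waveNumber σ μ ω) x ^ 2‖ ^ 2
      = 2 ^ 2 * MFreq σ μ ω := by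
    rw [norm_integral_dirichletProfile_sq_sq hk]
    norm_num [MFreq, waveNumber]
  rw [← Real.sqrt_sq (norm_nonneg _), hsq, Real.sqrt_mul (by positivity),
    Real.sqrt_sq zero_le_two]

lemma limsup_L2Norm_eq_Qfreq (hω : 0 < ω) (hdamp : 0 < μ + σ * ω ^ 2) :
    limsup (L2Norm (modalWave (ω * Complex.I) (dirichletProfile (waveNumber σ μ ω)))) atTop
      = Qfreq σ μ ω := by
  have hint : IntervalIntegrable (fun x ↦ dirichletProfile (waveNumber σ μ ω) x ^ 2) volume 0 1 :=
    ((contDiff_dirichletProfile (n := 0) _).continuous.pow 2).intervalIntegrable _ _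
  rw [limsup_L2Norm_modalWave hω hint, integral_norm_dirichletProfile_waveNumber_sq hω hdamp,
    norm_integral_dirichletProfile_waveNumber_sq hω hdamp, ← mul_add,
    mul_div_cancel_left₀ _ two_ne_zero, Qfreq]

lemma bddC2_cos (ω : ℝ) : BddC2 (fun t ↦ Real.cos (ω * t)) :=
  ⟨Real.contDiff_cos.comp (contDiff_const.mul contDiff_id), 1, fun _ _ ↦ Real.abs_cos_le_one _⟩

lemma supD_cos (ω : ℝ) : supD (fun t ↦ Real.cos (ω * t)) = 1 :=
  IsGreatest.csSup_eq ⟨⟨0, le_rfl, by simp⟩, by rintro _ ⟨t, -, rfl⟩; exact Real.abs_cos_le_one _⟩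

end Harmonic

theorem asymptotic_gain_L2_lower_bound_general {σ μ γ ω : ℝ} (hω : 0 < ω)
    (hdamp : 0 < μ + σ * ω ^ 2)
    (hgain : ∀ (d : ℝ → ℝ) (u : ℝ → ℝ → ℝ), BddC2 d → IsClassicalSolution σ μ d u →
      limsup (L2Norm u) atTop ≤ γ * supD d) :
    Qfreq σ μ ω ≤ γ := by
  have hle := hgain _ _ (bddC2_cos ω) (isClassicalSolution_cos hω hdamp)
  rwa [limsup_L2Norm_eq_Qfreq hω hdamp, supD_cos, mul_one] at hle

/-- any asymptotic-gain constant `γ` for the spatial L² norm satisfies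
`γ ≥ sup_{ω>0} Q(ω)`. -/
theorem asymptotic_gain_L2_lower_bound
    (σ μ : ℝ) (hσ : 0 < σ) (hμ : 0 ≤ μ)
    (γ : ℝ) (hγ : 0 ≤ γ)
    (hgain : ∀ (d : ℝ → ℝ) (u : ℝ → ℝ → ℝ), BddC2 d → IsClassicalSolution σ μ d u →
      Filter.limsup (fun t => L2Norm u t) Filter.atTop ≤ γ * supD d) :
    γ ≥ sSup {y : ℝ | ∃ ω : ℝ, 0 < ω ∧ y = Qfreq σ μ ω} := by
  refine Real.sSup_le ?_ hγ
  rintro _ ⟨ω, hω, rfl⟩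
  exact asymptotic_gain_L2_lower_bound_general hω (by positivity) hgain
end
end

section
/- Let σ > 0 and μ ≥ 0 be constants with μσ ≥ 1. Then: (i) for every bounded d ∈ C²([0,∞);ℝ) and every classical solution u of the damped wave system with boundary input d, limsup_{t→+∞} ( (∫₀¹ u(t,x)² dx)^{1/2} ) ≤ (1/√3) · sup_{t≥0} |d(t)|; and (ii) if γ ≥ 0 is any constant such that limsup_{t→+∞} ( (∫₀¹ u(t,x)² dx)^{1/2} ) ≤ γ · sup_{t≥0} |d(t)| holds for every bounded d ∈ C²([0,∞);ℝ) and every classical solution u with boundary input d, then γ ≥ 1/√3. In other words, the asymptotic gain of the displacement in the spatial L² norm equals 1/√3. -/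
open Real Filter MeasureTheory intervalIntegral Set

noncomputable section

/-!
Put `κ = μ - σ⁻¹`, which is nonnegative exactly when `μσ ≥ 1`. Along a solution the field
`h = ∂ₜu - σ ∂ₓₓu + κu` satisfies `∂ₜh = σ⁻¹(κu - h)`, so `(u, h)` solves a parabolic equation
coupled to an ODE, and `κ ≥ 0` makes the coupling cooperative: at the first time at which `u`
reaches zero, `h` is still positive. Comparison with `-C(2 - x²)e^{-δt}`, for `C` large and `δ`
small, then shows that a solution with nonnegative boundary input is at least `-2Ce^{-δt}`. Applied
to `D(1 - x) - u` and `u + D(1 - x)`, where `D = sup |d|` and `D(1 - x)` is the steady state for the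
input `D`, this gives `|u| ≤ D(1 - x) + o(1)`, and the `L²` norm of `D(1 - x)` is `D/√3`. The steady
state itself attains the gain.
-/

section Calculus

variable {E : Type*} [NormedAddCommGroup E] [NormedSpace ℝ E]

theorem norm_image_sub_sub_smul_le_of_hasDerivAt {f f' : ℝ → E} {s : Set ℝ} {L : E} {C x y : ℝ}
    (hf : ∀ z ∈ s, HasDerivAt f (f' z) z) (hC : ∀ z ∈ s, ‖f' z - L‖ ≤ C) (hs : Convex ℝ s)
    (hx : x ∈ s) (hy : y ∈ s) : ‖f y - f x - (y - x) • L‖ ≤ C * ‖y - x‖ := by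
  have hg (z : ℝ) (hz : z ∈ s) :
      HasDerivWithinAt (fun w => f w - w • L) (f' z - L) s z := by
    simpa using ((hf z hz).fun_sub ((hasDerivAt_id z).smul_const L)).hasDerivWithinAt
  convert hs.norm_image_sub_le_of_norm_hasDerivWithin_le hg hC hx hy using 2
  module

theorem norm_rectangle_sub_smul_le_of_hasDerivAt {f f₁ f₁₂ : ℝ → ℝ → E} {s r : Set ℝ} {L : E}
    {C a b t x : ℝ} (hs : Convex ℝ s) (hr : Convex ℝ r)
    (h₁ : ∀ z ∈ s, ∀ y ∈ r, HasDerivAt (fun w => f w y) (f₁ z y) z)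
    (h₁₂ : ∀ z ∈ s, ∀ y ∈ r, HasDerivAt (f₁ z) (f₁₂ z y) y)
    (hC : ∀ z ∈ s, ∀ y ∈ r, ‖f₁₂ z y - L‖ ≤ C) (ha : a ∈ s) (ht : t ∈ s) (hb : b ∈ r)
    (hx : x ∈ r) :
    ‖(f t x - f t b) - (f a x - f a b) - (t - a) • (x - b) • L‖ ≤ C * ‖x - b‖ * ‖t - a‖ :=
  norm_image_sub_sub_smul_le_of_hasDerivAt (f := fun t => f t x - f t b)
    (fun z hz => (h₁ z hz x hx).sub (h₁ z hz b hb))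
    (fun z hz => norm_image_sub_sub_smul_le_of_hasDerivAt (h₁₂ z hz) (hC z hz) hr hb hx) hs ha ht

/-- Peano's form of the symmetry of mixed partial derivatives: `∂ₜ∂ₓf` is not assumed to exist. -/
theorem hasDerivAt_deriv_swap {f f₁ f₁₂ : ℝ → ℝ → E} {f₂ : ℝ → E} {a b : ℝ}
    (h₁ : ∀ᶠ p : ℝ × ℝ in nhds (a, b), HasDerivAt (fun t => f t p.2) (f₁ p.1 p.2) p.1)
    (h₁₂ : ∀ᶠ p : ℝ × ℝ in nhds (a, b), HasDerivAt (f₁ p.1) (f₁₂ p.1 p.2) p.2)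
    (h₂ : ∀ᶠ t in nhds a, HasDerivAt (f t) (f₂ t) b)
    (hc : ContinuousAt (Function.uncurry f₁₂) (a, b)) :
    HasDerivAt f₂ (f₁₂ a b) a := by
  rw [hasDerivAt_iff_isLittleO, Asymptotics.isLittleO_iff]
  intro ε hε
  have hclose : ∀ᶠ p : ℝ × ℝ in nhds (a, b), ‖f₁₂ p.1 p.2 - f₁₂ a b‖ ≤ ε := by
    filter_upwards [hc.eventually (Metric.closedBall_mem_nhds _ hε)] with p hp
    exact mem_closedBall_iff_norm.1 hp
  obtain ⟨r, hr, hball⟩ := Metric.eventually_nhds_iff_ball.1 (h₁.and (h₁₂.and hclose))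
  simp only [← ball_prod_same, mem_prod, and_imp, Prod.forall] at hball
  have ha : a ∈ Metric.ball a r := Metric.mem_ball_self hr
  have hb : b ∈ Metric.ball b r := Metric.mem_ball_self hr
  filter_upwards [Metric.ball_mem_nhds a hr, h₂] with t ht hft
  have hlim : Tendsto (fun x => ‖slope (f t) b x - slope (f a) b x - (t - a) • f₁₂ a b‖)
      (nhdsWithin b {b}ᶜ) (nhds ‖f₂ t - f₂ a - (t - a) • f₁₂ a b‖) :=
    ((hft.tendsto_slope.sub h₂.self_of_nhds.tendsto_slope).sub_const _).norm
  refine le_of_tendsto hlim ?_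
  filter_upwards [self_mem_nhdsWithin, mem_nhdsWithin_of_mem_nhds (Metric.ball_mem_nhds b hr)]
    with x hxb hx
  have hne : x - b ≠ 0 := sub_ne_zero.2 hxb
  have hquot : slope (f t) b x - slope (f a) b x - (t - a) • f₁₂ a b
      = (x - b)⁻¹ • ((f t x - f t b) - (f a x - f a b) - (t - a) • (x - b) • f₁₂ a b) := by
    rw [smul_sub, smul_sub, smul_comm (t - a), inv_smul_smul₀ hne]
    simp only [slope_def_module]
  rw [hquot, norm_smul, norm_inv, inv_mul_le_iff₀ (norm_pos_iff.2 hne)]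
  calc _ ≤ ε * ‖x - b‖ * ‖t - a‖ :=
        norm_rectangle_sub_smul_le_of_hasDerivAt (convex_ball a r) (convex_ball b r)
          (fun z hz y hy => (hball z y hz hy).1) (fun z hz y hy => (hball z y hz hy).2.1)
          (fun z hz y hy => (hball z y hz hy).2.2) ha ht hb hx
    _ = ‖x - b‖ * (ε * ‖t - a‖) := by ring

theorem deriv_deriv_fun_sub {f g : ℝ → E} (hf : ContDiff ℝ 2 f) (hg : ContDiff ℝ 2 g) (x : ℝ) :
    deriv (deriv fun y => f y - g y) x = deriv (deriv f) x - deriv (deriv g) x := by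
  have hfirst : (deriv fun y => f y - g y) = fun y => deriv f y - deriv g y := funext fun y =>
    deriv_fun_sub (hf.differentiable two_ne_zero y) (hg.differentiable two_ne_zero y)
  rw [hfirst]
  exact deriv_fun_sub ((hf.deriv' (n := 1)).differentiable one_ne_zero x)
    ((hg.deriv' (n := 1)).differentiable one_ne_zero x)

theorem deriv_deriv_nonneg_of_isLocalMin {f : ℝ → ℝ} {x : ℝ} (hf : ContinuousAt f x)
    (hmin : IsLocalMin f x) : 0 ≤ deriv (deriv f) x := by
  by_contra! hneg
  have hmax : IsLocalMax f x := isLocalMax_of_deriv_deriv_neg hneg hmin.deriv_eq_zero hf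
  have hconst : f =ᶠ[nhds x] fun _ => f x := by
    filter_upwards [hmin, hmax] with y hle hge using le_antisymm hge hle
  simp [hconst.deriv.deriv_eq] at hneg

theorem deriv_nonpos_of_isLocalMinOn_Iic {f : ℝ → ℝ} {t : ℝ} (hmin : IsLocalMinOn f (Iic t) t) :
    deriv f t ≤ 0 := by
  by_cases hf : DifferentiableAt ℝ f t
  · have hcone : (-1 : ℝ) ∈ posTangentConeAt (Iic t) t := by
      refine mem_posTangentConeAt_of_segment_subset ((convex_Iic t).segment_subset ?_ ?_) <;> simp
    simpa using hmin.hasFDerivWithinAt_nonneg hf.hasDerivAt.hasFDerivAt.hasFDerivWithinAt hcone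
  · exact (deriv_zero_of_not_differentiableAt hf).le

theorem pos_of_neg_mul_le_deriv {k : ℝ → ℝ} {a s t : ℝ} (hst : s ≤ t)
    (hcont : ContinuousOn k (Icc s t)) (hdiff : DifferentiableOn ℝ k (Ioo s t))
    (hderiv : ∀ r ∈ Ioo s t, -(a * k r) ≤ deriv k r) (hs : 0 < k s) : 0 < k t := by
  have hmono : MonotoneOn (fun r => exp (a * r) * k r) (Icc s t) := by
    refine monotoneOn_of_deriv_nonneg (convex_Icc s t) (by fun_prop) ?_ ?_ <;> rw [interior_Icc]
    · fun_prop
    · intro r hr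
      have hexp : HasDerivAt (fun r => exp (a * r)) (exp (a * r) * a) r := by
        simpa using ((hasDerivAt_id r).const_mul a).exp
      have hk := (hdiff.differentiableAt (isOpen_Ioo.mem_nhds hr)).hasDerivAt
      rw [(hexp.fun_mul hk).deriv, mul_assoc, ← mul_add]
      exact mul_nonneg (exp_pos _).le (by linarith [hderiv r hr])
  have hle := hmono (left_mem_Icc.2 hst) (right_mem_Icc.2 hst) hst
  exact pos_of_mul_pos_right ((mul_pos (exp_pos _) hs).trans_le hle) (exp_pos _).le

end Calculus

theorem exists_first_zero {X : Type*} [TopologicalSpace X] {S : Set X} (hS : IsCompact S)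
    {v : ℝ → X → ℝ} (hv : Continuous (Function.uncurry v)) (hinit : ∀ x ∈ S, 0 < v 0 x)
    {T : ℝ} (hT : 0 ≤ T) {y : X} (hy : y ∈ S) (hneg : v T y ≤ 0) :
    ∃ t > 0, ∃ x ∈ S, v t x = 0 ∧ (∀ s ∈ Ico 0 t, ∀ z ∈ S, 0 < v s z) ∧ ∀ z ∈ S, 0 ≤ v t z := by
  have hcomp : IsCompact (Icc 0 T ×ˢ S ∩ {p | v p.1 p.2 ≤ 0}) :=
    (isCompact_Icc.prod hS).inter_right (isClosed_le hv continuous_const)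
  obtain ⟨⟨t, x⟩, ⟨⟨ht, hx⟩, hle⟩, hmin⟩ := hcomp.exists_isMinOn
    ⟨(T, y), ⟨right_mem_Icc.2 hT, hy⟩, hneg⟩ continuous_fst.continuousOn
  have hbefore : ∀ s ∈ Ico 0 t, ∀ z ∈ S, 0 < v s z := by
    intro s hs z hz
    by_contra! hsz
    exact hs.2.not_ge
      (hmin (show (s, z) ∈ _ from ⟨⟨⟨hs.1, hs.2.le.trans ht.2⟩, hz⟩, hsz⟩))
  have htpos : 0 < t := ht.1.lt_of_ne fun h0 => (hinit x hx).not_ge (h0 ▸ hle)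
  have hat : ∀ z ∈ S, 0 ≤ v t z := by
    intro z hz
    have hvz : Continuous fun s => v s z := hv.comp (by fun_prop : Continuous fun s => (s, z))
    refine ge_of_tendsto (hvz.continuousAt.mono_left (nhdsWithin_le_nhds (s := Iio t))) ?_
    filter_upwards [Ioo_mem_nhdsLT htpos] with s hs using (hbefore s ⟨hs.1.le, hs.2⟩ z hz).le
  exact ⟨t, htpos, x, hx, hle.antisymm (hat x hx), hbefore, hat⟩

theorem pos_of_cooperative_supersolution {σ a b c p q : ℝ} (hσ : 0 ≤ σ) (hb : 0 ≤ b)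
    {v h : ℝ → ℝ → ℝ} (hv : Continuous (Function.uncurry v))
    (hcont : ∀ x ∈ Ioo p q, ContinuousOn (fun t => h t x) (Ici 0))
    (hdiff : ∀ x ∈ Ioo p q, DifferentiableOn ℝ (fun t => h t x) (Ioi 0))
    (v_init : ∀ x ∈ Icc p q, 0 < v 0 x) (h_init : ∀ x ∈ Ioo p q, 0 < h 0 x)
    (v_left : ∀ t, 0 ≤ t → 0 < v t p) (v_right : ∀ t, 0 ≤ t → 0 < v t q)
    (v_super : ∀ t x, 0 < t → x ∈ Ioo p q → σ * u_xx v t x - c * v t x + h t x ≤ u_t v t x)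
    (h_super : ∀ t x, 0 < t → x ∈ Ioo p q → b * v t x - a * h t x ≤ u_t h t x)
    {t x : ℝ} (ht : 0 ≤ t) (hx : x ∈ Icc p q) : 0 < v t x := by
  by_contra! hneg
  obtain ⟨τ, hτ, ξ, hξ, hzero, hbefore, hat⟩ :=
    exists_first_zero isCompact_Icc hv v_init ht hx hneg
  have hξp : p ≠ ξ := fun e => (v_left τ hτ.le).ne' (e ▸ hzero)
  have hξq : ξ ≠ q := fun e => (v_right τ hτ.le).ne' (e ▸ hzero)
  have hξo : ξ ∈ Ioo p q := ⟨hξ.1.lt_of_ne hξp, hξ.2.lt_of_ne hξq⟩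
  have hv_t : u_t v τ ξ ≤ 0 := by
    refine deriv_nonpos_of_isLocalMinOn_Iic ?_
    filter_upwards [mem_nhdsWithin_of_mem_nhds (Ioi_mem_nhds hτ), self_mem_nhdsWithin]
      with s hs hsτ
    rcases (mem_Iic.1 hsτ).eq_or_lt with rfl | hlt
    · exact le_rfl
    · exact hzero.trans_le (hbefore s ⟨le_of_lt hs, hlt⟩ ξ hξ).le
  have hv_xx : 0 ≤ u_xx v τ ξ := by
    refine deriv_deriv_nonneg_of_isLocalMin
      (hv.comp (by fun_prop : Continuous fun y => (τ, y))).continuousAt ?_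
    filter_upwards [Icc_mem_nhds hξo.1 hξo.2] with y hy using hzero.trans_le (hat y hy)
  have hh : 0 < h τ ξ := by
    refine pos_of_neg_mul_le_deriv (k := fun s => h s ξ) (a := a) hτ.le
      ((hcont ξ hξo).mono Icc_subset_Ici_self) ((hdiff ξ hξo).mono Ioo_subset_Ioi_self) ?_
      (h_init ξ hξo)
    intro s hs
    linarith [h_super s ξ hs.1 hξo, mul_nonneg hb (hbefore s ⟨hs.1.le, hs.2⟩ ξ hξ).le,
      show u_t h s ξ = deriv (fun s => h s ξ) s from rfl]
  have hsuper := v_super τ ξ hτ hξo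
  rw [hzero, mul_zero, sub_zero] at hsuper
  linarith [mul_nonneg hσ hv_xx]

/-- First space derivative ∂u/∂x, so that `u_xx u = u_x (u_x u)` and `u_txx u = u_xx (u_t u)`
hold definitionally. -/
def u_x (u : ℝ → ℝ → ℝ) (t x : ℝ) : ℝ := deriv (fun y => u t y) x

section PartialDerivatives

variable {u v : ℝ → ℝ → ℝ} {n : WithTop ℕ∞}

theorem hasDerivAt_u_t (hu : Differentiable ℝ (Function.uncurry u)) (t x : ℝ) :
    HasDerivAt (fun τ => u τ x) (u_t u t x) t :=
  ((hu (t, x)).comp (f := fun τ => (τ, x)) t (by fun_prop)).hasDerivAt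

theorem hasDerivAt_u_x (hu : Differentiable ℝ (Function.uncurry u)) (t x : ℝ) :
    HasDerivAt (fun y => u t y) (u_x u t x) x :=
  ((hu (t, x)).comp (f := fun y => (t, y)) x (by fun_prop)).hasDerivAt

theorem contDiff_uncurry_u_t (hu : ContDiff ℝ (n + 1) (Function.uncurry u)) :
    ContDiff ℝ n (Function.uncurry (u_t u)) :=
  ContDiff.fderiv_apply (f := fun p τ => u τ p.2) (k := fun _ => (1 : ℝ))
    (hu.comp (by fun_prop : ContDiff ℝ (n + 1) fun q : (ℝ × ℝ) × ℝ => (q.2, q.1.2)))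
    contDiff_fst contDiff_const le_rfl

theorem contDiff_uncurry_u_x (hu : ContDiff ℝ (n + 1) (Function.uncurry u)) :
    ContDiff ℝ n (Function.uncurry (u_x u)) :=
  ContDiff.fderiv_apply (f := fun p y => u p.1 y) (k := fun _ => (1 : ℝ))
    (hu.comp (by fun_prop : ContDiff ℝ (n + 1) fun q : (ℝ × ℝ) × ℝ => (q.1.1, q.2)))
    contDiff_snd contDiff_const le_rfl

theorem u_x_u_t_eq_u_t_u_x (hu : ContDiff ℝ 2 (Function.uncurry u)) :
    u_x (u_t u) = u_t (u_x u) := by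
  have hdiff := hu.differentiable two_ne_zero
  have hx : ContDiff ℝ 1 (Function.uncurry (u_x u)) := contDiff_uncurry_u_x hu
  have hxt : ContDiff ℝ 0 (Function.uncurry (u_t (u_x u))) := contDiff_uncurry_u_t hx
  ext t x
  refine (hasDerivAt_deriv_swap (f := fun y τ => u τ y) (f₁ := fun y τ => u_x u τ y)
    (f₁₂ := fun y τ => u_t (u_x u) τ y) (.of_forall fun p => hasDerivAt_u_x hdiff p.2 p.1)
    (.of_forall fun p => hasDerivAt_u_t (hx.differentiable one_ne_zero) p.2 p.1)
    (.of_forall fun y => hasDerivAt_u_t hdiff t y) ?_).deriv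
  exact (hxt.continuous.comp continuous_swap).continuousAt

theorem u_t_fun_sub (hu : Differentiable ℝ (Function.uncurry u))
    (hv : Differentiable ℝ (Function.uncurry v)) :
    u_t (fun t x => u t x - v t x) = fun t x => u_t u t x - u_t v t x := by
  ext t x
  exact ((hasDerivAt_u_t hu t x).fun_sub (hasDerivAt_u_t hv t x)).deriv

end PartialDerivatives

theorem supD_const (c : ℝ) : supD (fun _ => c) = |c| := by
  have hset : {y : ℝ | ∃ t : ℝ, 0 ≤ t ∧ y = |c|} = {|c|} := by
    ext y
    exact ⟨fun ⟨_, _, hy⟩ => hy, fun hy => ⟨0, le_rfl, hy⟩⟩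
  rw [supD, hset, csSup_singleton]

theorem abs_le_supD {d : ℝ → ℝ} {M t : ℝ} (hM : ∀ s, 0 ≤ s → |d s| ≤ M) (ht : 0 ≤ t) :
    |d t| ≤ supD d :=
  le_csSup ⟨M, by rintro _ ⟨s, hs, rfl⟩; exact hM s hs⟩ ⟨t, ht, rfl⟩

theorem integral_sq_mul_one_sub_add (D e : ℝ) :
    ∫ x in (0 : ℝ)..1, (D * (1 - x) + e) ^ 2 = D ^ 2 / 3 + D * e + e ^ 2 := by
  have hder (x : ℝ) : HasDerivAt
      (fun x => -(D ^ 2 * (1 - x) ^ 3 / 3) - D * e * (1 - x) ^ 2 + e ^ 2 * x)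
      ((D * (1 - x) + e) ^ 2) x := by
    have h₁ : HasDerivAt (fun x : ℝ => 1 - x) (-1) x := (hasDerivAt_id x).const_sub 1
    refine (((((h₁.fun_pow 3).const_mul (D ^ 2)).div_const 3).fun_neg.fun_sub
      ((h₁.fun_pow 2).const_mul (D * e))).fun_add
      ((hasDerivAt_id' x).const_mul (e ^ 2))).congr_deriv ?_
    push_cast
    ring
  rw [integral_eq_sub_of_hasDerivAt (fun x _ => hder x)
    (Continuous.intervalIntegrable (by fun_prop) 0 1)]
  ring

theorem L2Norm_mul_one_sub (D t : ℝ) :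
    L2Norm (fun _ x => D * (1 - x)) t = 1 / √3 * |D| := by
  have hint : ∫ x in (0 : ℝ)..1, (D * (1 - x)) ^ 2 = D ^ 2 / 3 := by
    simpa using integral_sq_mul_one_sub_add D 0
  rw [L2Norm, hint, Real.sqrt_div (sq_nonneg D), Real.sqrt_sq_eq_abs]
  ring

theorem L2Norm_le_of_abs_le {u : ℝ → ℝ → ℝ} {t D e : ℝ} (hu : ContinuousOn (u t) (Icc 0 1))
    (hD : 0 ≤ D) (he : 0 ≤ e) (hle : ∀ x ∈ Icc (0 : ℝ) 1, |u t x| ≤ D * (1 - x) + e) :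
    L2Norm u t ≤ 1 / √3 * D + e := by
  have hsqrt : 1 / 2 ≤ 1 / √3 :=
    one_div_le_one_div_of_le (by positivity) (Real.sqrt_le_iff.2 ⟨by norm_num, by norm_num⟩)
  refine Real.sqrt_le_iff.2 ⟨by positivity, ?_⟩
  calc ∫ x in (0 : ℝ)..1, u t x ^ 2
      ≤ ∫ x in (0 : ℝ)..1, (D * (1 - x) + e) ^ 2 :=
        integral_mono_on zero_le_one ((hu.pow 2).intervalIntegrable_of_Icc zero_le_one)
          (Continuous.intervalIntegrable (by fun_prop) 0 1)
          fun x hx => sq_le_sq' (abs_le.1 (hle x hx)).1 (abs_le.1 (hle x hx)).2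
    _ = D ^ 2 / 3 + 2 * (1 / 2) * (D * e) + e ^ 2 := by
        rw [integral_sq_mul_one_sub_add]; ring
    _ ≤ D ^ 2 / 3 + 2 * (1 / √3) * (D * e) + e ^ 2 := by gcongr
    _ = (1 / √3 * D + e) ^ 2 := by
        have hsq : (1 / √3) ^ 2 = 1 / 3 := by rw [div_pow, Real.sq_sqrt zero_le_three, one_pow]
        linear_combination -D ^ 2 * hsq

theorem isClassicalSolution_mul_one_sub (σ μ D : ℝ) :
    IsClassicalSolution σ μ (fun _ => D) (fun _ x => D * (1 - x)) := by
  refine ⟨?_, fun t _ => ?_, fun t x _ _ => ?_, fun t _ => by simp⟩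
  · exact contDiff_const.mul (contDiff_const.sub contDiff_snd)
  · simp only [u_t, deriv_const]
    exact contDiff_const
  · have hderiv : (deriv fun y : ℝ => D * (1 - y)) = fun _ => -D := by
      ext y
      simp
    simp [u_tt, u_xx, u_txx, u_t, hderiv]

/-- The field `h = ∂ₜu - σ ∂ₓₓu + (μ - σ⁻¹) u`, which makes the damped wave equation the
first-order system `∂ₜu = σ ∂ₓₓu - (μ - σ⁻¹) u + h`, `∂ₜh = σ⁻¹ (μ - σ⁻¹) u - σ⁻¹ h`. -/
def auxField (σ μ : ℝ) (u : ℝ → ℝ → ℝ) (t x : ℝ) : ℝ :=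
  u_t u t x - σ * u_xx u t x + (μ - σ⁻¹) * u t x

theorem continuous_uncurry_auxField {σ μ : ℝ} {u : ℝ → ℝ → ℝ}
    (hu : ContDiff ℝ 2 (Function.uncurry u)) : Continuous (Function.uncurry (auxField σ μ u)) := by
  have hx : ContDiff ℝ 1 (Function.uncurry (u_x u)) := contDiff_uncurry_u_x hu
  have hxx : ContDiff ℝ 0 (Function.uncurry (u_x (u_x u))) := contDiff_uncurry_u_x hx
  have ht : ContDiff ℝ 1 (Function.uncurry (u_t u)) := contDiff_uncurry_u_t hu
  exact (ht.continuous.sub (hxx.continuous.const_mul σ)).add (hu.continuous.const_mul _)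

namespace IsClassicalSolution

variable {σ μ : ℝ} {d d₁ d₂ : ℝ → ℝ} {u v : ℝ → ℝ → ℝ}

theorem fun_sub (hu : IsClassicalSolution σ μ d₁ u) (hv : IsClassicalSolution σ μ d₂ v) :
    IsClassicalSolution σ μ (fun t => d₁ t - d₂ t) (fun t x => u t x - v t x) := by
  obtain ⟨hu₂, hut, hu_eq, hu_bdry⟩ := hu
  obtain ⟨hv₂, hvt, hv_eq, hv_bdry⟩ := hv
  have hsub_t := u_t_fun_sub (hu₂.differentiable two_ne_zero) (hv₂.differentiable two_ne_zero)
  have hu_t : ContDiff ℝ 1 (Function.uncurry (u_t u)) := contDiff_uncurry_u_t hu₂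
  have hv_t : ContDiff ℝ 1 (Function.uncurry (u_t v)) := contDiff_uncurry_u_t hv₂
  have hsub_tt : u_tt (fun t x => u t x - v t x) = fun t x => u_tt u t x - u_tt v t x :=
    (congrArg u_t hsub_t).trans
      (u_t_fun_sub (hu_t.differentiable one_ne_zero) (hv_t.differentiable one_ne_zero))
  refine ⟨hu₂.sub hv₂, fun t ht => ?_, fun t x ht hx => ?_, fun t ht => ?_⟩
  · rw [hsub_t]
    exact (hut t ht).sub (hvt t ht)
  · have hsub_xx : u_xx (fun t x => u t x - v t x) t x = u_xx u t x - u_xx v t x :=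
      deriv_deriv_fun_sub (hu₂.comp (by fun_prop : ContDiff ℝ 2 fun y => (t, y)))
        (hv₂.comp (by fun_prop : ContDiff ℝ 2 fun y => (t, y))) x
    have hsub_txx : u_txx (fun t x => u t x - v t x) t x = u_txx u t x - u_txx v t x := by
      simp only [u_txx, hsub_t]
      exact deriv_deriv_fun_sub (hut t ht) (hvt t ht) x
    simp only [hsub_tt, hsub_xx, hsub_txx, hsub_t]
    rw [hu_eq t x ht hx, hv_eq t x ht hx]
    ring
  · simp [hu_bdry t ht, hv_bdry t ht]

/-- Here `u_txx u` is continuous because the equation expresses it through derivatives of order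
two; this is what allows exchanging `∂ₜ` and `∂ₓₓ` although `u` is only of class `C²`. -/
theorem hasDerivAt_u_xx (h : IsClassicalSolution σ μ d u) (hσ : σ ≠ 0) {t x : ℝ} (ht : 0 < t)
    (hx : x ∈ Ioo (0 : ℝ) 1) : HasDerivAt (fun τ => u_xx u τ x) (u_txx u t x) t := by
  obtain ⟨hu, hut, heq, -⟩ := h
  have hu_x : ContDiff ℝ 1 (Function.uncurry (u_x u)) := contDiff_uncurry_u_x hu
  have hu_xx : ContDiff ℝ 0 (Function.uncurry (u_xx u)) := contDiff_uncurry_u_x hu_x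
  have hu_t : ContDiff ℝ 1 (Function.uncurry (u_t u)) := contDiff_uncurry_u_t hu
  have hu_tt : ContDiff ℝ 0 (Function.uncurry (u_tt u)) := contDiff_uncurry_u_t hu_t
  have hmem : ∀ᶠ p : ℝ × ℝ in nhds (t, x), 0 < p.1 ∧ p.2 ∈ Ioo (0 : ℝ) 1 :=
    (continuous_fst.continuousAt.eventually (Ioi_mem_nhds ht)).and
      (continuous_snd.continuousAt.eventually (Ioo_mem_nhds hx.1 hx.2))
  have hcont : ContinuousAt (Function.uncurry (u_txx u)) (t, x) := by
    refine (((hu_tt.continuous.sub hu_xx.continuous).add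
      (hu_t.continuous.const_mul μ)).div_const σ).continuousAt.congr ?_
    filter_upwards [hmem] with ⟨s, y⟩ ⟨hs, hy⟩
    change (u_tt u s y - u_xx u s y + μ * u_t u s y) / σ = u_txx u s y
    rw [heq s y hs.le (Ioo_subset_Icc_self hy)]
    field_simp
    ring
  refine hasDerivAt_deriv_swap (f := u_x u) (f₁ := u_t (u_x u)) (f₁₂ := u_txx u)
    (f₂ := fun τ => u_xx u τ x)
    (.of_forall fun p => hasDerivAt_u_t (hu_x.differentiable one_ne_zero) p.1 p.2) ?_
    (.of_forall fun τ => hasDerivAt_u_x (hu_x.differentiable one_ne_zero) τ x) hcont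
  filter_upwards [hmem] with ⟨s, y⟩ ⟨hs, _⟩
  rw [← u_x_u_t_eq_u_t_u_x hu]
  exact (((hut s hs.le).deriv' (n := 1)).differentiable one_ne_zero y).hasDerivAt

theorem hasDerivAt_auxField (h : IsClassicalSolution σ μ d u) (hσ : σ ≠ 0) {t x : ℝ} (ht : 0 < t)
    (hx : x ∈ Ioo (0 : ℝ) 1) :
    HasDerivAt (fun τ => auxField σ μ u τ x)
      (σ⁻¹ * (μ - σ⁻¹) * u t x - σ⁻¹ * auxField σ μ u t x) t := by
  have hu_t : ContDiff ℝ 1 (Function.uncurry (u_t u)) := contDiff_uncurry_u_t h.1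
  have heq : u_t (u_t u) t x = _ := h.2.2.1 t x ht.le (Ioo_subset_Icc_self hx)
  refine (((hasDerivAt_u_t (hu_t.differentiable one_ne_zero) t x).fun_sub
    ((h.hasDerivAt_u_xx hσ ht hx).const_mul σ)).fun_add
    ((hasDerivAt_u_t (h.1.differentiable two_ne_zero) t x).const_mul (μ - σ⁻¹))).congr_deriv ?_
  rw [heq, auxField]
  field_simp
  ring

end IsClassicalSolution

/-- The barrier `-C (2 - x²) e^{-δt}`, a negative strictly concave profile decaying at rate `δ`;
for small `δ` it is a subsolution of the system solved by a classical solution and its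
`auxField`. -/
def lowerBarrier (C δ t x : ℝ) : ℝ := C * exp (-δ * t) * (x ^ 2 - 2)

section LowerBarrier

variable {σ μ C δ t x : ℝ}

theorem contDiff_uncurry_lowerBarrier {n : WithTop ℕ∞} :
    ContDiff ℝ n (Function.uncurry (lowerBarrier C δ)) := by
  have : ContDiff ℝ n fun p : ℝ × ℝ => C * exp (-δ * p.1) * (p.2 ^ 2 - 2) := by fun_prop
  exact this

theorem hasDerivAt_lowerBarrier (C δ t x : ℝ) :
    HasDerivAt (fun τ => lowerBarrier C δ τ x) (-δ * lowerBarrier C δ t x) t := by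
  have hexp : HasDerivAt (fun τ : ℝ => -δ * τ) (-δ) t := by
    simpa using (hasDerivAt_id t).const_mul (-δ)
  refine ((hexp.exp.const_mul C).mul_const (x ^ 2 - 2)).congr_deriv ?_
  rw [lowerBarrier]
  ring

theorem u_xx_lowerBarrier (C δ t x : ℝ) :
    u_xx (lowerBarrier C δ) t x = 2 * (C * exp (-δ * t)) := by
  have hderiv : (deriv fun y => C * exp (-δ * t) * (y ^ 2 - 2))
      = fun y => 2 * (C * exp (-δ * t)) * y := by
    ext y
    simp only [deriv_const_mul_field', deriv_sub_const, deriv_pow_field]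
    ring
  simp only [u_xx, lowerBarrier, hderiv]
  simp

theorem neg_two_mul_le_lowerBarrier (hC : 0 ≤ C) (δ t x : ℝ) :
    -(2 * (C * exp (-δ * t))) ≤ lowerBarrier C δ t x := by
  have : 0 ≤ C * exp (-δ * t) * x ^ 2 := by positivity
  rw [lowerBarrier]
  linarith

theorem lowerBarrier_le_neg (hC : 0 ≤ C) (δ t : ℝ) (hx : x ∈ Icc (0 : ℝ) 1) :
    lowerBarrier C δ t x ≤ -(C * exp (-δ * t)) := by
  have hsq : x ^ 2 ≤ 1 := pow_le_one₀ hx.1 hx.2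
  have : 0 ≤ C * exp (-δ * t) * (1 - x ^ 2) := mul_nonneg (by positivity) (by linarith)
  rw [lowerBarrier]
  linarith

theorem lowerBarrier_nonpos (hC : 0 ≤ C) (δ t : ℝ) (hx : x ∈ Icc (0 : ℝ) 1) :
    lowerBarrier C δ t x ≤ 0 :=
  (lowerBarrier_le_neg hC δ t hx).trans (neg_nonpos.2 (by positivity))

theorem sub_lowerBarrier_supersolution {v : ℝ → ℝ → ℝ} (hv : ContDiff ℝ 2 (Function.uncurry v))
    (hσ : 0 ≤ σ) (hδ : δ ≤ σ / 2) (hC : 0 ≤ C) (hx : x ∈ Icc (0 : ℝ) 1) :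
    σ * u_xx (fun t x => v t x - lowerBarrier C δ t x) t x
        - (μ - σ⁻¹) * (v t x - lowerBarrier C δ t x)
        + (auxField σ μ v t x - (μ - σ⁻¹ + σ / 2) * lowerBarrier C δ t x)
      ≤ u_t (fun t x => v t x - lowerBarrier C δ t x) t x := by
  have hsub_xx : u_xx (fun t x => v t x - lowerBarrier C δ t x) t x
      = u_xx v t x - u_xx (lowerBarrier C δ) t x :=
    deriv_deriv_fun_sub (hv.comp (by fun_prop : ContDiff ℝ 2 fun y => (t, y)))
      (contDiff_uncurry_lowerBarrier.comp (by fun_prop : ContDiff ℝ 2 fun y => (t, y))) x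
  have hsub_t : u_t (fun t x => v t x - lowerBarrier C δ t x) t x
      = u_t v t x - -δ * lowerBarrier C δ t x :=
    ((hasDerivAt_u_t (hv.differentiable two_ne_zero) t x).fun_sub
      (hasDerivAt_lowerBarrier C δ t x)).deriv
  have hle := mul_le_mul_of_nonneg_left (neg_two_mul_le_lowerBarrier hC δ t x) hσ
  have hδw := mul_le_mul_of_nonpos_right hδ (lowerBarrier_nonpos hC δ t hx)
  rw [hsub_xx, hsub_t, u_xx_lowerBarrier, auxField]
  linarith

end LowerBarrier

namespace IsClassicalSolution

variable {σ μ C D δ : ℝ} {d : ℝ → ℝ} {u v : ℝ → ℝ → ℝ}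

theorem auxField_sub_lowerBarrier_supersolution (h : IsClassicalSolution σ μ d v) (hσ : σ ≠ 0)
    (hδ : δ * (μ - σ⁻¹ + σ / 2) ≤ 1 / 2) (hC : 0 ≤ C) {t x : ℝ} (ht : 0 < t)
    (hx : x ∈ Ioo (0 : ℝ) 1) :
    σ⁻¹ * (μ - σ⁻¹) * (v t x - lowerBarrier C δ t x)
        - σ⁻¹ * (auxField σ μ v t x - (μ - σ⁻¹ + σ / 2) * lowerBarrier C δ t x)
      ≤ u_t (fun t x => auxField σ μ v t x - (μ - σ⁻¹ + σ / 2) * lowerBarrier C δ t x) t x := by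
  have hδw := mul_le_mul_of_nonpos_right hδ
    (lowerBarrier_nonpos hC δ t (Ioo_subset_Icc_self hx))
  rw [u_t, ((h.hasDerivAt_auxField hσ ht hx).fun_sub
    ((hasDerivAt_lowerBarrier C δ t x).const_mul (μ - σ⁻¹ + σ / 2))).deriv]
  linear_combination hδw + lowerBarrier C δ t x / 2 * inv_mul_cancel₀ hσ

theorem lowerBarrier_lt (h : IsClassicalSolution σ μ d v) (hσ : 0 < σ) (hμσ : 1 ≤ μ * σ)
    (hd : ∀ t, 0 ≤ t → 0 ≤ d t) (hδ : δ ≤ σ / 2) (hδ' : δ * (μ - σ⁻¹ + σ / 2) ≤ 1 / 2)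
    (hC : 0 < C) (hv₀ : ∀ x ∈ Icc (0 : ℝ) 1, -C < v 0 x)
    (hh₀ : ∀ x ∈ Icc (0 : ℝ) 1, -(σ / 2 * C) < auxField σ μ v 0 x)
    {t x : ℝ} (ht : 0 ≤ t) (hx : x ∈ Icc (0 : ℝ) 1) : lowerBarrier C δ t x < v t x := by
  set κ := μ - σ⁻¹
  set w := lowerBarrier C δ
  have hκ : 0 ≤ κ := sub_nonneg.2 ((inv_le_iff_one_le_mul₀ hσ).2 hμσ)
  have hw : Continuous (Function.uncurry w) := (contDiff_uncurry_lowerBarrier (n := 0)).continuous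
  have hw_neg (t x : ℝ) (hx : x ∈ Icc (0 : ℝ) 1) : w t x < 0 :=
    (lowerBarrier_le_neg hC.le δ t hx).trans_lt (neg_neg_of_pos (by positivity))
  have hw₀ (x : ℝ) (hx : x ∈ Icc (0 : ℝ) 1) : w 0 x ≤ -C := by
    simpa using lowerBarrier_le_neg hC.le δ 0 hx
  suffices 0 < v t x - w t x from sub_pos.1 this
  refine pos_of_cooperative_supersolution (v := fun t x => v t x - w t x)
    (h := fun t x => auxField σ μ v t x - (κ + σ / 2) * w t x) (a := σ⁻¹) (b := σ⁻¹ * κ) (c := κ)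
    hσ.le (by positivity) (h.1.continuous.sub hw) ?cont ?diff ?v_init ?h_init ?left ?right
    (fun t x _ hx => sub_lowerBarrier_supersolution h.1 hσ.le hδ hC.le (Ioo_subset_Icc_self hx))
    (fun t x ht hx => h.auxField_sub_lowerBarrier_supersolution hσ.ne' hδ' hC.le ht hx) ht hx
  case cont =>
    intro x _
    have hc : Continuous fun t : ℝ => (t, x) := by fun_prop
    exact (((continuous_uncurry_auxField h.1).comp hc).sub
      ((hw.comp hc).const_mul _)).continuousOn
  case diff =>
    exact fun x hx t ht => ((h.hasDerivAt_auxField hσ.ne' ht hx).fun_sub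
      ((hasDerivAt_lowerBarrier C δ t x).const_mul (κ + σ / 2))).differentiableAt
        |>.differentiableWithinAt
  case v_init => exact fun x hx => by linarith [hv₀ x hx, hw₀ x hx]
  case h_init =>
    intro x hx
    have hx' := Ioo_subset_Icc_self hx
    have hle : (κ + σ / 2) * w 0 x ≤ (κ + σ / 2) * -C := by gcongr; exact hw₀ x hx'
    linarith [hh₀ x hx', mul_nonneg hκ hC.le]
  case left => exact fun t ht => by linarith [hd t ht, (h.2.2.2 t ht).1, hw_neg t 0 (by simp)]
  case right => exact fun t ht => by linarith [(h.2.2.2 t ht).2, hw_neg t 1 (by simp)]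

theorem exists_neg_mul_exp_le (h : IsClassicalSolution σ μ d v) (hσ : 0 < σ) (hμσ : 1 ≤ μ * σ)
    (hd : ∀ t, 0 ≤ t → 0 ≤ d t) (hδ : δ ≤ σ / 2) (hδ' : δ * (μ - σ⁻¹ + σ / 2) ≤ 1 / 2) :
    ∃ C > 0, ∀ t x, 0 ≤ t → x ∈ Icc (0 : ℝ) 1 → -(C * exp (-δ * t)) ≤ v t x := by
  have hslice : Continuous fun x : ℝ => ((0 : ℝ), x) := by fun_prop
  obtain ⟨B, hB⟩ := isCompact_Icc.exists_bound_of_continuousOn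
    (h.1.continuous.comp hslice).continuousOn (s := Icc (0 : ℝ) 1)
  obtain ⟨B', hB'⟩ := isCompact_Icc.exists_bound_of_continuousOn
    ((continuous_uncurry_auxField (σ := σ) (μ := μ) h.1).comp hslice).continuousOn
    (s := Icc (0 : ℝ) 1)
  obtain ⟨C, hC, hBC, hBC'⟩ : ∃ C, 0 < C ∧ B < C ∧ B' < σ / 2 * C :=
    ((eventually_gt_atTop 0).and ((eventually_gt_atTop B).and
      ((tendsto_id.const_mul_atTop (half_pos hσ)).eventually_gt_atTop B'))).exists
  refine ⟨2 * C, by positivity, fun t x ht hx => ?_⟩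
  have hlt := h.lowerBarrier_lt hσ hμσ hd hδ hδ' hC
    (fun y hy => (neg_lt_neg hBC).trans_le (abs_le.1 (hB y hy)).1)
    (fun y hy => (neg_lt_neg hBC').trans_le (abs_le.1 (hB' y hy)).1) ht hx
  linarith [neg_two_mul_le_lowerBarrier hC.le δ t x]

theorem exists_abs_le_add_mul_exp (h : IsClassicalSolution σ μ d u) (hσ : 0 < σ)
    (hμσ : 1 ≤ μ * σ) (hd : ∀ t, 0 ≤ t → |d t| ≤ D) :
    ∃ C > 0, ∃ δ > 0, ∀ t x, 0 ≤ t → x ∈ Icc (0 : ℝ) 1 →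
      |u t x| ≤ D * (1 - x) + C * exp (-δ * t) := by
  have hκ : 0 < μ - σ⁻¹ + σ / 2 := by
    linarith [(inv_le_iff_one_le_mul₀ hσ).2 hμσ, half_pos hσ]
  obtain ⟨δ, hδpos, hδ, hδ'⟩ : ∃ δ > 0, δ ≤ σ / 2 ∧ δ * (μ - σ⁻¹ + σ / 2) ≤ 1 / 2 :=
    ⟨min (σ / 2) (1 / 2 / (μ - σ⁻¹ + σ / 2)), by positivity, min_le_left _ _,
      (le_div_iff₀ hκ).1 (min_le_right _ _)⟩
  obtain ⟨C₁, hC₁, hupper⟩ :=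
    ((isClassicalSolution_mul_one_sub σ μ D).fun_sub h).exists_neg_mul_exp_le hσ hμσ
      (fun t ht => sub_nonneg.2 (abs_le.1 (hd t ht)).2) hδ hδ'
  obtain ⟨C₂, -, hlower⟩ :=
    (h.fun_sub (isClassicalSolution_mul_one_sub σ μ (-D))).exists_neg_mul_exp_le hσ hμσ
      (fun t ht => sub_nonneg.2 (abs_le.1 (hd t ht)).1) hδ hδ'
  refine ⟨max C₁ C₂, lt_max_of_lt_left hC₁, δ, hδpos, fun t x ht hx => ?_⟩
  have hle₁ : C₁ * exp (-δ * t) ≤ max C₁ C₂ * exp (-δ * t) := by gcongr; exact le_max_left _ _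
  have hle₂ : C₂ * exp (-δ * t) ≤ max C₁ C₂ * exp (-δ * t) := by gcongr; exact le_max_right _ _
  exact abs_le.2 ⟨by linarith [hlower t x ht hx], by linarith [hupper t x ht hx]⟩

theorem limsup_L2Norm_le (h : IsClassicalSolution σ μ d u) (hσ : 0 < σ) (hμσ : 1 ≤ μ * σ)
    (hd : ∀ t, 0 ≤ t → |d t| ≤ D) :
    limsup (fun t => L2Norm u t) atTop ≤ 1 / √3 * D := by
  obtain ⟨C, hC, δ, hδ, hle⟩ := h.exists_abs_le_add_mul_exp hσ hμσ hd
  have hdecay : Tendsto (fun t => exp (-δ * t)) atTop (nhds 0) :=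
    tendsto_exp_atBot.comp (tendsto_id.const_mul_atTop_of_neg (neg_neg_of_pos hδ))
  have hlim : Tendsto (fun t => 1 / √3 * D + C * exp (-δ * t)) atTop (nhds (1 / √3 * D)) := by
    simpa using (hdecay.const_mul C).const_add (1 / √3 * D)
  have hbound : ∀ᶠ t in atTop, L2Norm u t ≤ 1 / √3 * D + C * exp (-δ * t) := by
    filter_upwards [eventually_ge_atTop 0] with t ht
    exact L2Norm_le_of_abs_le
      (h.1.continuous.comp (by fun_prop : Continuous fun x => (t, x))).continuousOn
      ((abs_nonneg _).trans (hd t ht)) (by positivity) fun x hx => hle t x ht hx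
  have hnonneg : IsCoboundedUnder (· ≤ ·) atTop fun t => L2Norm u t :=
    isCoboundedUnder_le_of_le atTop fun t => Real.sqrt_nonneg _
  exact (limsup_le_limsup hbound hnonneg hlim.isBoundedUnder_le).trans_eq hlim.limsup_eq

end IsClassicalSolution

/-- when `μσ ≥ 1`, the asymptotic gain of the displacement in the spatial
L² norm equals `1/√3`: the constant `1/√3` is an asymptotic-gain constant, and any
asymptotic-gain constant `γ` satisfies `γ ≥ 1/√3`. -/
theorem asymptotic_gain_L2_eq_inv_sqrt_three
    (σ μ : ℝ) (hσ : 0 < σ) (hμ : 0 ≤ μ) (hμσ : 1 ≤ μ * σ) :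
    (∀ (d : ℝ → ℝ) (u : ℝ → ℝ → ℝ), BddC2 d → IsClassicalSolution σ μ d u →
      Filter.limsup (fun t => L2Norm u t) Filter.atTop ≤ (1 / Real.sqrt 3) * supD d) ∧
    (∀ γ : ℝ, 0 ≤ γ →
      (∀ (d : ℝ → ℝ) (u : ℝ → ℝ → ℝ), BddC2 d → IsClassicalSolution σ μ d u →
        Filter.limsup (fun t => L2Norm u t) Filter.atTop ≤ γ * supD d) →
      1 / Real.sqrt 3 ≤ γ) := by
  refine ⟨fun d u ⟨_, _, hM⟩ h => h.limsup_L2Norm_le hσ hμσ fun t ht => abs_le_supD hM ht,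
    fun γ _ hγ => ?_⟩
  have hle := hγ (fun _ => 1) (fun _ x => 1 * (1 - x)) ⟨contDiff_const, 1, by simp⟩
    (isClassicalSolution_mul_one_sub σ μ 1)
  simpa only [L2Norm_mul_one_sub, limsup_const, supD_const, abs_one, mul_one] using hle
end
end

section
/- Let a > 0 and b > 0 be real numbers, and define h(x) := ((cosh(a(2−x)) − cos(2b)cosh(ax))cos(bx) − sin(2b)sin(bx)cosh(ax))/(cosh(2a) − cos(2b)) and g(x) := (sin(2b)cos(bx)sinh(ax) − (sinh(a(2−x)) + cos(2b)sinh(ax))sin(bx))/(cosh(2a) − cos(2b)). Then for all x ∈ [0,1]: h(x)² + g(x)² = (cosh(2a(1−x)) − cos(2b(1−x)))/(cosh(2a) − cos(2b)). -/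
/-!
Put `α = a + i b`. The two profiles are the real and imaginary parts of a single function,
`h(x) + i g(x) = sinh ((1 - x) α) / sinh α`, as one sees on multiplying numerator and denominator
by `2 sinh (conj α)` and expanding both products by `2 sinh z sinh w = cosh (z + w) - cosh (z - w)`.
The same product formula with `w = conj z` gives `2 |sinh (s + i t)|² = cosh 2s - cos 2t`, so taking
squared moduli of the quotient proves the identity.
-/

open Real intervalIntegral MeasureTheory

noncomputable section

/-- The profile `h`. -/
def hProf (a b : ℝ) (x : ℝ) : ℝ :=
  ((Real.cosh (a * (2 - x)) - Real.cos (2 * b) * Real.cosh (a * x)) * Real.cos (b * x) -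
    Real.sin (2 * b) * Real.sin (b * x) * Real.cosh (a * x)) /
  (Real.cosh (2 * a) - Real.cos (2 * b))

/-- The profile `g`. -/
def gProf (a b : ℝ) (x : ℝ) : ℝ :=
  (Real.sin (2 * b) * Real.cos (b * x) * Real.sinh (a * x) -
    (Real.sinh (a * (2 - x)) + Real.cos (2 * b) * Real.sinh (a * x)) * Real.sin (b * x)) /
  (Real.cosh (2 * a) - Real.cos (2 * b))

lemma two_mul_sinh_mul_sinh (z w : ℂ) :
    2 * Complex.sinh z * Complex.sinh w = Complex.cosh (z + w) - Complex.cosh (z - w) := by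
  rw [Complex.cosh_add, Complex.cosh_sub]
  ring

lemma two_mul_sinh_add_mul_I_mul_sinh_sub_mul_I (s t : ℂ) :
    2 * Complex.sinh (s + t * Complex.I) * Complex.sinh (s - t * Complex.I) =
      Complex.cosh (2 * s) - Complex.cos (2 * t) := by
  rw [two_mul_sinh_mul_sinh, ← Complex.cosh_mul_I]
  ring_nf

lemma two_mul_norm_sinh_sq (s t : ℝ) :
    2 * ‖Complex.sinh (s + t * Complex.I)‖ ^ 2 = Real.cosh (2 * s) - Real.cos (2 * t) := by
  have h_conj : (starRingEnd ℂ) (Complex.sinh (s + t * Complex.I)) =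
      Complex.sinh (s - t * Complex.I) := by
    simp [← Complex.sinh_conj, sub_eq_add_neg]
  apply Complex.ofReal_injective
  push_cast
  rw [← Complex.mul_conj', h_conj, ← mul_assoc, two_mul_sinh_add_mul_I_mul_sinh_sub_mul_I]

lemma cosh_sub_mul_I (s t : ℂ) :
    Complex.cosh (s - t * Complex.I) =
      Complex.cosh s * Complex.cos t - Complex.sinh s * Complex.sin t * Complex.I := by
  rw [Complex.cosh_sub, Complex.cosh_mul_I, Complex.sinh_mul_I, mul_assoc]

lemma two_mul_sinh_sub_mul_I_mul_sinh_one_sub_mul (a b x : ℂ) :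
    2 * Complex.sinh (a - b * Complex.I) * Complex.sinh ((1 - x) * (a + b * Complex.I)) =
      (Complex.cosh (a * (2 - x)) * Complex.cos (b * x) -
          Complex.cosh (a * x) * Complex.cos (2 * b - b * x)) +
        (Complex.sinh (a * x) * Complex.sin (2 * b - b * x) -
          Complex.sinh (a * (2 - x)) * Complex.sin (b * x)) * Complex.I := by
  have h_add : a - b * Complex.I + (1 - x) * (a + b * Complex.I) =
      a * (2 - x) - b * x * Complex.I := by ring
  have h_sub : a - b * Complex.I - (1 - x) * (a + b * Complex.I) =
      a * x - (2 * b - b * x) * Complex.I := by ring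
  rw [two_mul_sinh_mul_sinh, h_add, h_sub, cosh_sub_mul_I, cosh_sub_mul_I]
  ring

lemma hProf_add_gProf_mul_I {a b : ℝ} (hD : Real.cosh (2 * a) - Real.cos (2 * b) ≠ 0) (x : ℝ) :
    (hProf a b x : ℂ) + gProf a b x * Complex.I =
      Complex.sinh ((1 - x) * (a + b * Complex.I)) / Complex.sinh (a + b * Complex.I) := by
  have h_den : ((Real.cosh (2 * a) - Real.cos (2 * b) : ℝ) : ℂ) =
      2 * Complex.sinh (a - b * Complex.I) * Complex.sinh (a + b * Complex.I) := by
    push_cast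
    rw [← two_mul_sinh_add_mul_I_mul_sinh_sub_mul_I, mul_right_comm]
  have h_conj_ne : 2 * Complex.sinh (a - b * Complex.I) ≠ 0 :=
    left_ne_zero_of_mul (h_den ▸ Complex.ofReal_ne_zero.2 hD)
  rw [← mul_div_mul_left _ _ h_conj_ne, ← h_den, two_mul_sinh_sub_mul_I_mul_sinh_one_sub_mul,
    Complex.cos_sub, Complex.sin_sub, hProf, gProf]
  push_cast
  ring

theorem profile_sq_sum_general {a b : ℝ} (hD : Real.cosh (2 * a) - Real.cos (2 * b) ≠ 0) (x : ℝ) :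
    (hProf a b x) ^ 2 + (gProf a b x) ^ 2 =
      (Real.cosh (2 * a * (1 - x)) - Real.cos (2 * b * (1 - x))) /
        (Real.cosh (2 * a) - Real.cos (2 * b)) := by
  have h_scale : (1 - x : ℂ) * (a + b * Complex.I) =
      (a * (1 - x) : ℝ) + (b * (1 - x) : ℝ) * Complex.I := by
    push_cast
    ring
  calc (hProf a b x) ^ 2 + (gProf a b x) ^ 2
      = ‖(hProf a b x : ℂ) + gProf a b x * Complex.I‖ ^ 2 := by
        rw [Complex.sq_norm, Complex.normSq_add_mul_I]
    _ = (2 * ‖Complex.sinh ((1 - x) * (a + b * Complex.I))‖ ^ 2) /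
          (2 * ‖Complex.sinh (a + b * Complex.I)‖ ^ 2) := by
        rw [hProf_add_gProf_mul_I hD, norm_div, div_pow, mul_div_mul_left _ _ two_ne_zero]
    _ = _ := by
        rw [h_scale, two_mul_norm_sinh_sq, two_mul_norm_sinh_sq, mul_assoc 2 a, mul_assoc 2 b]

lemma cosh_sub_cos_pos {s : ℝ} (hs : s ≠ 0) (t : ℝ) : 0 < Real.cosh s - Real.cos t :=
  sub_pos.2 ((Real.cos_le_one t).trans_lt (Real.one_lt_cosh.2 hs))

/-- `h(x)² + g(x)² = (cosh(2a(1−x)) − cos(2b(1−x)))/(cosh(2a) − cos(2b))`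
for all `x ∈ [0,1]`. -/
theorem profile_sq_sum (a b : ℝ) (ha : 0 < a) (hb : 0 < b) :
    ∀ x ∈ Set.Icc (0:ℝ) 1,
      (hProf a b x) ^ 2 + (gProf a b x) ^ 2 =
        (Real.cosh (2 * a * (1 - x)) - Real.cos (2 * b * (1 - x))) /
          (Real.cosh (2 * a) - Real.cos (2 * b)) :=
  fun x _ ↦ profile_sq_sum_general (cosh_sub_cos_pos (by positivity) (2 * b)).ne' x
end
end

section
/- Define, for real a, b > 0, p(a,b) := (b·sinh(2a) − a·sin(2b))/(4ab(cosh(2a) − cos(2b))) and M(a,b) := (4(a²+b²) − 4(b·sin(2b)·cosh(2a) + a·sinh(2a)·cos(2b)) + sinh²(2a) + sin²(2b)) / (16(a²+b²)(cosh(2a) − cos(2b))²). Then p(a,b) → 1/6 and M(a,b) → 1/36 as (a,b) → (0,0) with a > 0, b > 0; consequently √(p(a,b) + √(M(a,b))) → 1/√3 as (a,b) → (0,0) with a > 0, b > 0. -/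
open Real Filter Topology

noncomputable section

/-- `p(a,b) := (b·sinh(2a) − a·sin(2b))/(4ab(cosh(2a) − cos(2b)))`. -/
def pQ (a b : ℝ) : ℝ :=
  (b * Real.sinh (2 * a) - a * Real.sin (2 * b)) /
    (4 * a * b * (Real.cosh (2 * a) - Real.cos (2 * b)))

/-- `M(a,b) := (4(a²+b²) − 4(b sin(2b)cosh(2a) + a sinh(2a)cos(2b)) + sinh²(2a) + sin²(2b))
 / (16(a²+b²)(cosh(2a) − cos(2b))²)`. -/
def MQ (a b : ℝ) : ℝ :=
  (4 * (a ^ 2 + b ^ 2) -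
      4 * (b * Real.sin (2 * b) * Real.cosh (2 * a) +
        a * Real.sinh (2 * a) * Real.cos (2 * b)) +
      Real.sinh (2 * a) ^ 2 + Real.sin (2 * b) ^ 2) /
    (16 * (a ^ 2 + b ^ 2) * (Real.cosh (2 * a) - Real.cos (2 * b)) ^ 2)

/-!
Put `z = a + ib` and `w = 2z`. Then `cosh 2a - cos 2b = 2 ‖sinh z‖²` and the numerator of `M` is
`‖sinh w - w‖²`, so that with `s(z) = sinh z / z` and `c(z) = (sinh z - z) / z³`

* `M = ‖c(w)‖² / ‖s(z)‖⁴`;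
* `p = (a² c(2a) + b² c(2ib)) / (a² + b²) / ‖s(z)‖²`, where `c` is real on both axes.

Now `s → 1` and `c → 1/6` at `0`, and a weighted average, with nonnegative weights, of two
quantities with a common limit has that limit whether or not the weights converge.
-/

lemma tendsto_nhdsNE_of_continuousWithinAt {X Y : Type*} [TopologicalSpace X] [TopologicalSpace Y]
    {f : X → Y} {s : Set X} {x : X} {y : Y} (hf : ContinuousWithinAt f s x) (hx : f x = y)
    (hs : ∀ z ∈ s, f z ≠ y) : Tendsto f (𝓝[s] x) (𝓝[≠] y) :=
  hx ▸ hf.tendsto_nhdsWithin fun z hz => hx ▸ hs z hz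

lemma nhdsWithin_ne_and_ne_le_nhdsNE {X Y : Type*} [TopologicalSpace X] [TopologicalSpace Y]
    (x : X) (y : Y) : 𝓝[{q : X × Y | q.1 ≠ x ∧ q.2 ≠ y}] (x, y) ≤ 𝓝[≠] (x, y) :=
  nhdsWithin_mono _ fun _ hq h => hq.1 (congrArg Prod.fst h)

lemma tendsto_weightedAverage {α 𝕜 E : Type*} [Field 𝕜] [LinearOrder 𝕜] [IsStrictOrderedRing 𝕜]
    [AddCommGroup E] [Module 𝕜 E] [TopologicalSpace E] [LocallyConvexSpace 𝕜 E]
    {l : Filter α} {u v : α → 𝕜} {f g : α → E} {c : E}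
    (hu : ∀ᶠ x in l, 0 ≤ u x) (hv : ∀ᶠ x in l, 0 ≤ v x) (huv : ∀ᶠ x in l, 0 < u x + v x)
    (hf : Tendsto f l (𝓝 c)) (hg : Tendsto g l (𝓝 c)) :
    Tendsto (fun x => (u x / (u x + v x)) • f x + (v x / (u x + v x)) • g x) l (𝓝 c) := by
  refine (LocallyConvexSpace.convex_basis (𝕜 := 𝕜) c).tendsto_right_iff.2 ?_
  rintro s ⟨hs, hconvex⟩
  filter_upwards [hu, hv, huv, hf hs, hg hs] with x hux hvx huvx hfx hgx
  exact convex_iff_div.1 hconvex hfx hgx hux hvx huvx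

/-- The quotient `sinh z / z`, which carries the denominators of `pQ` and `MQ`. Its removable
singularity at `0` is not filled in: the value there is the junk value `0`. -/
def sinhQuotient (z : ℂ) : ℂ :=
  Complex.sinh z / z

/-- The quotient by `z ^ 3` of the remainder of `sinh z` after its linear term, which carries the
numerators of `pQ` and `MQ`. Its removable singularity at `0` is not filled in: the value there is
the junk value `0`. -/
def sinhCubicQuotient (z : ℂ) : ℂ :=
  (Complex.sinh z - z) / z ^ 3

lemma tendsto_sinhQuotient : Tendsto sinhQuotient (𝓝[≠] 0) (𝓝 1) := by
  have hslope := (Complex.hasDerivAt_sinh 0).tendsto_slope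
  rw [Complex.cosh_zero] at hslope
  refine hslope.congr fun z => ?_
  rw [slope_def_field, Complex.sinh_zero, sub_zero, sub_zero, sinhQuotient]

lemma sinh_sub_cubic_isLittleO_pow_three :
    (fun z : ℂ => Complex.sinh z - (z + z ^ 3 / 6)) =o[𝓝 0] (· ^ 3) := by
  have hexp := Complex.exp_sub_sum_range_succ_isLittleO_pow 3
  have hexp_neg : (fun z : ℂ => Complex.exp (-z) -
      ∑ i ∈ Finset.range 4, (-z) ^ i / i.factorial) =o[𝓝 0] (· ^ 3) := by
    refine (hexp.comp_tendsto (continuous_neg.tendsto' 0 0 neg_zero)).trans_isBigO ?_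
    exact .of_bound 1 (.of_forall fun z => by simp)
  refine ((hexp.sub hexp_neg).const_mul_left (1 / 2)).congr_left fun z => ?_
  simp only [Complex.sinh, Finset.sum_range_succ, Finset.sum_range_zero, Nat.factorial]
  push_cast
  ring

lemma tendsto_sinhCubicQuotient : Tendsto sinhCubicQuotient (𝓝[≠] 0) (𝓝 (1 / 6)) := by
  have herror := (sinh_sub_cubic_isLittleO_pow_three.mono
    (nhdsWithin_le_nhds (s := {0}ᶜ))).tendsto_div_nhds_zero.add_const (1 / 6)
  rw [zero_add] at herror
  refine herror.congr' ?_
  filter_upwards [self_mem_nhdsWithin] with z (hz : z ≠ 0)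
  rw [sinhCubicQuotient]
  field_simp
  ring

lemma sinh_add_mul_I (x y : ℝ) :
    Complex.sinh (x + y * Complex.I) =
      (Real.sinh x * Real.cos y : ℝ) + (Real.cosh x * Real.sin y : ℝ) * Complex.I := by
  rw [Complex.sinh_add, Complex.sinh_mul_I, Complex.cosh_mul_I]
  push_cast
  ring

lemma norm_sinh_add_mul_I_sq (a b : ℝ) :
    ‖Complex.sinh (a + b * Complex.I)‖ ^ 2 = (Real.cosh (2 * a) - Real.cos (2 * b)) / 2 := by
  rw [sinh_add_mul_I, ← Complex.normSq_eq_norm_sq, Complex.normSq_add_mul_I, Real.cosh_two_mul,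
    Real.cos_two_mul, mul_pow, mul_pow, Real.cosh_sq, Real.sin_sq]
  ring

lemma norm_sinh_add_mul_I_sub_sq (x y : ℝ) :
    ‖Complex.sinh (x + y * Complex.I) - (x + y * Complex.I)‖ ^ 2 =
      x ^ 2 + y ^ 2 - 2 * (y * Real.sin y * Real.cosh x + x * Real.sinh x * Real.cos y) +
        Real.sinh x ^ 2 + Real.sin y ^ 2 := by
  have hsub : Complex.sinh (x + y * Complex.I) - (x + y * Complex.I) =
      (Real.sinh x * Real.cos y - x : ℝ) + (Real.cosh x * Real.sin y - y : ℝ) * Complex.I := by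
    rw [sinh_add_mul_I]
    push_cast
    ring
  rw [hsub, ← Complex.normSq_eq_norm_sq, Complex.normSq_add_mul_I]
  linear_combination Real.sin y ^ 2 * Real.cosh_sq x + Real.sinh x ^ 2 * Real.cos_sq' y

lemma sinhCubicQuotient_ofReal_re (x : ℝ) :
    (sinhCubicQuotient x).re = (Real.sinh x - x) / x ^ 3 := by
  have hcast : sinhCubicQuotient x = ((Real.sinh x - x) / x ^ 3 : ℝ) := by
    rw [sinhCubicQuotient]
    push_cast
    rfl
  rw [hcast, Complex.ofReal_re]

lemma sinhCubicQuotient_ofReal_mul_I_re (y : ℝ) :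
    (sinhCubicQuotient (y * Complex.I)).re = (y - Real.sin y) / y ^ 3 := by
  have hcast : sinhCubicQuotient (y * Complex.I) = ((y - Real.sin y) / y ^ 3 : ℝ) := by
    rw [sinhCubicQuotient, Complex.sinh_mul_I, ← sub_mul, mul_pow, Complex.I_pow_three, mul_neg,
      div_neg, mul_div_mul_right _ _ Complex.I_ne_zero]
    push_cast
    ring
  rw [hcast, Complex.ofReal_re]

lemma norm_sinhQuotient_add_mul_I_sq (a b : ℝ) :
    ‖sinhQuotient (a + b * Complex.I)‖ ^ 2 =
      (Real.cosh (2 * a) - Real.cos (2 * b)) / (2 * (a ^ 2 + b ^ 2)) := by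
  rw [sinhQuotient, norm_div, div_pow, norm_sinh_add_mul_I_sq, ← Complex.normSq_eq_norm_sq,
    Complex.normSq_add_mul_I, div_div]

lemma norm_sinhCubicQuotient_add_mul_I_sq (x y : ℝ) :
    ‖sinhCubicQuotient (x + y * Complex.I)‖ ^ 2 =
      (x ^ 2 + y ^ 2 - 2 * (y * Real.sin y * Real.cosh x + x * Real.sinh x * Real.cos y) +
        Real.sinh x ^ 2 + Real.sin y ^ 2) / (x ^ 2 + y ^ 2) ^ 3 := by
  rw [sinhCubicQuotient, norm_div, div_pow, norm_sinh_add_mul_I_sub_sq, norm_pow, pow_right_comm,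
    ← Complex.normSq_eq_norm_sq, Complex.normSq_add_mul_I]

lemma pQ_eq_weightedAverage_div {a b : ℝ} (ha : a ≠ 0) (hb : b ≠ 0) :
    pQ a b =
      ((a ^ 2 / (a ^ 2 + b ^ 2)) • (sinhCubicQuotient (2 * a : ℝ)).re +
        (b ^ 2 / (a ^ 2 + b ^ 2)) • (sinhCubicQuotient ((2 * b : ℝ) * Complex.I)).re) /
          ‖sinhQuotient (a + b * Complex.I)‖ ^ 2 := by
  have hab : a ^ 2 + b ^ 2 ≠ 0 := by positivity
  rw [sinhCubicQuotient_ofReal_re, sinhCubicQuotient_ofReal_mul_I_re,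
    norm_sinhQuotient_add_mul_I_sq, pQ, smul_eq_mul, smul_eq_mul]
  field_simp
  ring

lemma MQ_eq_norm_sq_div_norm_sq_sq (a b : ℝ) :
    MQ a b =
      ‖sinhCubicQuotient ((2 * a : ℝ) + (2 * b : ℝ) * Complex.I)‖ ^ 2 /
        (‖sinhQuotient (a + b * Complex.I)‖ ^ 2) ^ 2 := by
  rw [norm_sinhCubicQuotient_add_mul_I_sq, norm_sinhQuotient_add_mul_I_sq, MQ]
  rcases eq_or_ne (a ^ 2 + b ^ 2) 0 with hab | hab
  · -- at the origin both sides are quotients by `0`, hence `0`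
    simp [hab, ← mul_add, mul_pow]
  rw [show (2 * a) ^ 2 + (2 * b) ^ 2 = 4 * (a ^ 2 + b ^ 2) by ring]
  field_simp
  ring

lemma tendsto_norm_sinhQuotient_sq :
    Tendsto (fun q : ℝ × ℝ => ‖sinhQuotient (q.1 + q.2 * Complex.I)‖ ^ 2)
      (𝓝[≠] (0, 0)) (𝓝 1) := by
  have hz : Tendsto (fun q : ℝ × ℝ => (q.1 + q.2 * Complex.I : ℂ)) (𝓝[≠] (0, 0)) (𝓝[≠] 0) := by
    refine tendsto_nhdsNE_of_continuousWithinAt (by fun_prop) (by simp) fun q hq h => hq ?_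
    simpa [Complex.ext_iff, Prod.ext_iff] using h
  simpa using (tendsto_sinhQuotient.comp hz).norm.pow 2

lemma tendsto_pQ :
    Tendsto (fun q : ℝ × ℝ => pQ q.1 q.2) (𝓝[{q | q.1 ≠ 0 ∧ q.2 ≠ 0}] (0, 0)) (𝓝 (1 / 6)) := by
  have hre : Tendsto (fun z => (sinhCubicQuotient z).re) (𝓝[≠] 0) (𝓝 (1 / 6)) := by
    simpa [Function.comp_def] using
      (Complex.continuous_re.tendsto _).comp tendsto_sinhCubicQuotient
  have hreal : Tendsto (fun q : ℝ × ℝ => ((2 * q.1 : ℝ) : ℂ))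
      (𝓝[{q | q.1 ≠ 0 ∧ q.2 ≠ 0}] (0, 0)) (𝓝[≠] 0) :=
    tendsto_nhdsNE_of_continuousWithinAt (by fun_prop) (by simp) fun q hq => by simpa using hq.1
  have himag : Tendsto (fun q : ℝ × ℝ => ((2 * q.2 : ℝ) * Complex.I : ℂ))
      (𝓝[{q | q.1 ≠ 0 ∧ q.2 ≠ 0}] (0, 0)) (𝓝[≠] 0) :=
    tendsto_nhdsNE_of_continuousWithinAt (by fun_prop) (by simp) fun q hq => by simpa using hq.2
  have havg := tendsto_weightedAverage (u := fun q : ℝ × ℝ => q.1 ^ 2)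
    (v := fun q : ℝ × ℝ => q.2 ^ 2) (.of_forall fun q => sq_nonneg q.1)
    (.of_forall fun q => sq_nonneg q.2)
    (eventually_mem_nhdsWithin.mono fun q hq => by have := hq.1; positivity)
    (hre.comp hreal) (hre.comp himag)
  have hquot := havg.div
    (tendsto_norm_sinhQuotient_sq.mono_left (nhdsWithin_ne_and_ne_le_nhdsNE 0 0)) one_ne_zero
  rw [div_one] at hquot
  refine hquot.congr' ?_
  filter_upwards [self_mem_nhdsWithin] with q hq
  exact (pQ_eq_weightedAverage_div hq.1 hq.2).symm

lemma tendsto_MQ : Tendsto (fun q : ℝ × ℝ => MQ q.1 q.2) (𝓝[≠] (0, 0)) (𝓝 (1 / 36)) := by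
  have hw : Tendsto (fun q : ℝ × ℝ => ((2 * q.1 : ℝ) + (2 * q.2 : ℝ) * Complex.I : ℂ))
      (𝓝[≠] (0, 0)) (𝓝[≠] 0) := by
    refine tendsto_nhdsNE_of_continuousWithinAt (by fun_prop) (by simp) fun q hq h => hq ?_
    simpa [Complex.ext_iff, Prod.ext_iff] using h
  have hquot := ((tendsto_sinhCubicQuotient.comp hw).norm.pow 2).div
    (tendsto_norm_sinhQuotient_sq.pow 2) (by norm_num)
  have hlimit : ‖(1 / 6 : ℂ)‖ ^ 2 / 1 ^ 2 = 1 / 36 := by norm_num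
  rw [hlimit] at hquot
  exact hquot.congr fun q => (MQ_eq_norm_sq_div_norm_sq_sq q.1 q.2).symm

lemma sqrt_one_sixth_add_sqrt : √(1 / 6 + √(1 / 36)) = 1 / √3 := by
  have hsqrt : √(1 / 36) = 1 / 6 := by
    rw [Real.sqrt_eq_iff_mul_self_eq] <;> norm_num
  rw [hsqrt, ← Real.sqrt_one, ← Real.sqrt_div zero_le_one]
  norm_num

theorem limit_of_Q_at_zero_general :
    Tendsto (fun q : ℝ × ℝ => pQ q.1 q.2)
      (𝓝[{q | q.1 ≠ 0 ∧ q.2 ≠ 0}] (0, 0)) (𝓝 (1 / 6)) ∧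
    Tendsto (fun q : ℝ × ℝ => MQ q.1 q.2) (𝓝[≠] (0, 0)) (𝓝 (1 / 36)) ∧
    Tendsto (fun q : ℝ × ℝ => √(pQ q.1 q.2 + √(MQ q.1 q.2)))
      (𝓝[{q | q.1 ≠ 0 ∧ q.2 ≠ 0}] (0, 0)) (𝓝 (1 / √3)) := by
  refine ⟨tendsto_pQ, tendsto_MQ, ?_⟩
  rw [← sqrt_one_sixth_add_sqrt]
  exact (tendsto_pQ.add
    (tendsto_MQ.mono_left (nhdsWithin_ne_and_ne_le_nhdsNE 0 0)).sqrt).sqrt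

/-- `p(a,b) → 1/6`, `M(a,b) → 1/36` and `√(p(a,b) + √(M(a,b))) → 1/√3`
as `(a,b) → (0,0)` with `a > 0`, `b > 0`. -/
theorem limit_of_Q_at_zero :
    Tendsto (fun q : ℝ × ℝ => pQ q.1 q.2)
      (nhdsWithin (0, 0) {q : ℝ × ℝ | 0 < q.1 ∧ 0 < q.2}) (nhds (1 / 6)) ∧
    Tendsto (fun q : ℝ × ℝ => MQ q.1 q.2)
      (nhdsWithin (0, 0) {q : ℝ × ℝ | 0 < q.1 ∧ 0 < q.2}) (nhds (1 / 36)) ∧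
    Tendsto (fun q : ℝ × ℝ => Real.sqrt (pQ q.1 q.2 + Real.sqrt (MQ q.1 q.2)))
      (nhdsWithin (0, 0) {q : ℝ × ℝ | 0 < q.1 ∧ 0 < q.2})
      (nhds (1 / Real.sqrt 3)) := by
  obtain ⟨hp, hM, hQ⟩ := limit_of_Q_at_zero_general
  have hpos : 𝓝[{q : ℝ × ℝ | 0 < q.1 ∧ 0 < q.2}] (0, 0) ≤ 𝓝[{q | q.1 ≠ 0 ∧ q.2 ≠ 0}] (0, 0) :=
    nhdsWithin_mono _ fun _ hq => ⟨hq.1.ne', hq.2.ne'⟩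
  exact ⟨hp.mono_left hpos, hM.mono_left (hpos.trans (nhdsWithin_ne_and_ne_le_nhdsNE 0 0)),
    hQ.mono_left hpos⟩
end
end

section
/- Let σ > 0 and μ ≥ 0 be real constants and let n be a positive integer with μ + n²π²σ > 2nπ. Set k := (μ + n²π²σ)/2 and r := √((μ + n²π²σ)² − 4n²π²)/2. Then n²π²/(μ + n²π²σ) ≤ k − r ≤ 2n²π²/(μ + n²π²σ). -/
open Real

/-!
The roots `k - r ≤ k + r` of `t² - bt + c` have sum `b` and product `c`, so `2c/b` is their
harmonic mean. The two bounds say that the smaller of two nonnegative numbers, not both zero,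
lies between half their harmonic mean and their harmonic mean.
-/

section HarmonicMean

variable {K : Type*} [Field K] [LinearOrder K] [IsStrictOrderedRing K] {x y : K}

theorem mul_div_add_le_left (hxy : 0 < x + y) : x * y / (x + y) ≤ x := by
  rw [div_le_iff₀ hxy, mul_add]
  exact le_add_of_nonneg_left (mul_self_nonneg x)

theorem le_two_mul_mul_div_add (hx : 0 ≤ x) (hle : x ≤ y) (hxy : 0 < x + y) :
    x ≤ 2 * (x * y) / (x + y) := by
  rw [le_div_iff₀ hxy, mul_add, two_mul]
  gcongr

end HarmonicMean

theorem half_sub_half_sqrt_mul_half_add_half_sqrt {b c : ℝ} (hdisc : 4 * c ≤ b ^ 2) :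
    (b / 2 - √(b ^ 2 - 4 * c) / 2) * (b / 2 + √(b ^ 2 - 4 * c) / 2) = c := by
  have hsq : √(b ^ 2 - 4 * c) ^ 2 = b ^ 2 - 4 * c := sq_sqrt (sub_nonneg.2 hdisc)
  linear_combination -hsq / 4

theorem overdamped_root_bounds_general {b c : ℝ} (hb : 0 < b) (hc : 0 ≤ c)
    (hdisc : 4 * c ≤ b ^ 2) :
    c / b ≤ b / 2 - √(b ^ 2 - 4 * c) / 2 ∧
    b / 2 - √(b ^ 2 - 4 * c) / 2 ≤ 2 * c / b := by
  have hprod := half_sub_half_sqrt_mul_half_add_half_sqrt hdisc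
  set s := √(b ^ 2 - 4 * c)
  have hsum : b / 2 - s / 2 + (b / 2 + s / 2) = b := by ring
  have hsum_pos : 0 < b / 2 - s / 2 + (b / 2 + s / 2) := hsum.symm ▸ hb
  have hs : 0 ≤ s := sqrt_nonneg _
  have hsb : s ≤ b := sqrt_le_iff.2 ⟨hb.le, by linarith⟩
  have hsmaller_nonneg : 0 ≤ b / 2 - s / 2 := by linarith
  have hsmaller_le : b / 2 - s / 2 ≤ b / 2 + s / 2 := by linarith
  have hlower := mul_div_add_le_left hsum_pos
  have hupper := le_two_mul_mul_div_add hsmaller_nonneg hsmaller_le hsum_pos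
  rw [hprod, hsum] at hlower hupper
  exact ⟨hlower, hupper⟩

/-- in the overdamped case `μ + n²π²σ > 2nπ`, with `k = (μ + n²π²σ)/2`
and `r = √((μ + n²π²σ)² − 4n²π²)/2`, one has
`n²π²/(μ + n²π²σ) ≤ k − r ≤ 2n²π²/(μ + n²π²σ)`. -/
theorem overdamped_root_bounds
    (σ μ : ℝ) (hσ : 0 < σ) (hμ : 0 ≤ μ)
    (n : ℕ) (hn : 1 ≤ n)
    (hover : 2 * (n:ℝ) * π < μ + (n:ℝ) ^ 2 * π ^ 2 * σ)
    (k r : ℝ)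
    (hk : k = (μ + (n:ℝ) ^ 2 * π ^ 2 * σ) / 2)
    (hr : r = Real.sqrt ((μ + (n:ℝ) ^ 2 * π ^ 2 * σ) ^ 2 - 4 * (n:ℝ) ^ 2 * π ^ 2) / 2) :
    (n:ℝ) ^ 2 * π ^ 2 / (μ + (n:ℝ) ^ 2 * π ^ 2 * σ) ≤ k - r ∧
    k - r ≤ 2 * (n:ℝ) ^ 2 * π ^ 2 / (μ + (n:ℝ) ^ 2 * π ^ 2 * σ) := by
  have h2nπ : 0 ≤ 2 * (n:ℝ) * π := by positivity
  rw [hk, hr, mul_assoc 4, mul_assoc 2]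
  exact overdamped_root_bounds_general (h2nπ.trans_lt hover) (by positivity)
    (by linarith [pow_le_pow_left₀ h2nπ hover.le 2])
end
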